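/- (Theorem 27) Let 0 < θ₀ < θ₁ < 1, 0 < θ < 1, 0 < r, r₀, r₁, q₀, q₁ ≤ ∞, a, a₀, a₁, b₀, b₁ ∈ SV, ‖s^{-1/r₀} b₀(s)/a₀(s)‖_{r₀,(0,1)} < ∞, and ‖s^{-1/r₁} b₁(s)/a₁(s)‖_{r₁,(0,1)} < ∞. Put c₀(t) = a₀(t) ‖s^{-1/r₀} b₀(s)/a₀(s)‖_{r₀,(0,t)}, c₁(t) = a₁(t) ‖s^{-1/r₁} b₁(s)/a₁(s)‖_{r₁,(0,t)}, and ρ(t) = t^{θ₁-θ₀} c₀(t)/c₁(t). Then (Ā^𝓡_{θ₀,r₀,b₀,q₀,a₀}, Ā^𝓡_{θ₁,r₁,b₁,q₁,a₁})_{θ,r;a} ≅ Ā_{η,r;a^#}, where η = (1-θ)θ₀ + θθ₁ and a^#(t) = c₀(t)^{1-θ} c₁(t)^θ a(ρ(t)). -/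

import Mathlib

open MeasureTheory Set ENNReal Filter

noncomputable section

/-- The `L_q` quasi-norm (with respect to Lebesgue measure) of an `ℝ≥0∞`-valued
function over a set of reals; for `q = ∞` it is the essential supremum. -/
def LqNorm (q : ℝ≥0∞) (s : Set ℝ) (g : ℝ → ℝ≥0∞) : ℝ≥0∞ :=
  if q = ∞ then essSup g (volume.restrict s)
  else (∫⁻ t in s, g t ^ q.toReal) ^ q⁻¹.toReal

/-- The weight `s ↦ s ^ (-1/r) * b s`, as an `ℝ≥0∞`-valued function
(`1/∞ = 0` by convention). -/
def svWgt (r : ℝ≥0∞) (b : ℝ → ℝ) : ℝ → ℝ≥0∞ :=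
  fun s => ENNReal.ofReal (s ^ (-(r⁻¹.toReal)) * b s)

/-- `f` and `g` are equivalent on `s`: each is bounded by a constant multiple
of the other there. -/
def EquivOn (s : Set ℝ) (f g : ℝ → ℝ) : Prop :=
  ∃ C : ℝ, 0 < C ∧ ∀ t ∈ s, C⁻¹ * g t ≤ f t ∧ f t ≤ C * g t

/-- A positive measurable function `b` on `(0,∞)` is slowly varying if for every
`ε > 0`, `t ^ ε * b t` is equivalent to a non-decreasing function and
`t ^ (-ε) * b t` is equivalent to a non-increasing function. -/
def SlowlyVarying (b : ℝ → ℝ) : Prop :=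
  AEMeasurable b (volume.restrict (Ioi 0)) ∧ (∀ t ∈ Ioi (0:ℝ), 0 < b t) ∧
    ∀ ε : ℝ, 0 < ε →
      (∃ g : ℝ → ℝ, MonotoneOn g (Ioi 0) ∧ EquivOn (Ioi 0) (fun t => t ^ ε * b t) g) ∧
      (∃ g : ℝ → ℝ, AntitoneOn g (Ioi 0) ∧ EquivOn (Ioi 0) (fun t => t ^ (-ε) * b t) g)

/-- A quasi-Banach space continuously embedded into the ambient (Hausdorff) space `E`,
recorded via its extended-real-valued quasi-norm; the space itself is the set of
vectors of finite quasi-norm. -/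
structure QuasiBanach (E : Type*) [AddCommGroup E] [Module ℝ E] where
  N : E → ℝ≥0∞
  zero : N 0 = 0
  definite : ∀ x, N x = 0 → x = 0
  smul : ∀ (c : ℝ) (x : E), N (c • x) = ENNReal.ofReal |c| * N x
  quasi : ∃ C : ℝ≥0∞, 1 ≤ C ∧ C ≠ ∞ ∧ ∀ x y, N (x + y) ≤ C * (N x + N y)
  complete : ∀ f : ℕ → E,
    (∀ ε : ℝ≥0∞, 0 < ε → ∃ M : ℕ, ∀ m ≥ M, ∀ n ≥ M, N (f m - f n) < ε) →
    (∀ n, N (f n) ≠ ∞) →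
    ∃ g : E, N g ≠ ∞ ∧ Tendsto (fun n => N (f n - g)) atTop (nhds 0)

variable {E : Type*} [AddCommGroup E] [Module ℝ E]

/-- The Peetre K-functional of the couple whose quasi-norms are `N₀`, `N₁`. -/
def Kf (N₀ N₁ : E → ℝ≥0∞) (t : ℝ) (f : E) : ℝ≥0∞ :=
  ⨅ g : E, N₀ g + ENNReal.ofReal t * N₁ (f - g)

/-- The quasi-norm of the real interpolation space `Ā_{θ,q;b}`. -/
def normK (N₀ N₁ : E → ℝ≥0∞) (θ : ℝ) (q : ℝ≥0∞) (b : ℝ → ℝ) (f : E) : ℝ≥0∞ :=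
  LqNorm q (Ioi 0) fun u =>
    ENNReal.ofReal (u ^ (-θ - q⁻¹.toReal) * b u) * Kf N₀ N₁ u f

/-- The quasi-norm of the limiting interpolation space `Ā^𝓛_{σ,r,b,q,a}`. -/
def normL (N₀ N₁ : E → ℝ≥0∞) (σ : ℝ) (r q : ℝ≥0∞) (b a : ℝ → ℝ) (f : E) : ℝ≥0∞ :=
  LqNorm r (Ioi 0) fun t =>
    ENNReal.ofReal (t ^ (-(r⁻¹.toReal)) * (b t / a t)) *
      LqNorm q (Ioo 0 t) fun u =>
        ENNReal.ofReal (u ^ (-σ - q⁻¹.toReal) * a u) * Kf N₀ N₁ u f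

/-- The quasi-norm of the limiting interpolation space `Ā^𝓡_{σ,r,b,q,a}`. -/
def normR (N₀ N₁ : E → ℝ≥0∞) (σ : ℝ) (r q : ℝ≥0∞) (b a : ℝ → ℝ) (f : E) : ℝ≥0∞ :=
  LqNorm r (Ioi 0) fun t =>
    ENNReal.ofReal (t ^ (-(r⁻¹.toReal)) * (b t / a t)) *
      LqNorm q (Ioi t) fun u =>
        ENNReal.ofReal (u ^ (-σ - q⁻¹.toReal) * a u) * Kf N₀ N₁ u f

/-- Two (extended-real-valued) quasi-norms define the same space with
equivalent quasi-norms. -/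
def EquivNorms (nX nY : E → ℝ≥0∞) : Prop :=
  ∃ C : ℝ≥0∞, 0 < C ∧ C ≠ ∞ ∧ ∀ f : E, C⁻¹ * nY f ≤ nX f ∧ nX f ≤ C * nY f

section basics

/-- Symmetric ratio. -/
def RR (s t : ℝ) : ℝ := max (s / t) (t / s)

theorem RR_comm (s t : ℝ) : RR s t = RR t s := max_comm _ _

theorem RR_of_le {s t : ℝ} (hs : 0 < s) (h : s ≤ t) : RR s t = t / s := by
  have ht : 0 < t := lt_of_lt_of_le hs h
  apply max_eq_right
  rw [div_le_div_iff₀ ht hs]; nlinarith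

theorem RR_of_ge {s t : ℝ} (ht : 0 < t) (h : t ≤ s) : RR s t = s / t := by
  rw [RR_comm, RR_of_le ht h]

theorem one_le_RR {s t : ℝ} (hs : 0 < s) (ht : 0 < t) : 1 ≤ RR s t := by
  rcases le_total s t with h | h
  · rw [RR_of_le hs h]; exact (one_le_div hs).2 h
  · rw [RR_of_ge ht h]; exact (one_le_div ht).2 h

theorem RR_pos {s t : ℝ} (hs : 0 < s) (ht : 0 < t) : 0 < RR s t :=
  lt_of_lt_of_le one_pos (one_le_RR hs ht)

theorem RR_le {s t L : ℝ} (hs : 0 < s) (ht : 0 < t) (h1 : s ≤ L * t) (h2 : t ≤ L * s) :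
    RR s t ≤ L := max_le ((div_le_iff₀ ht).2 h1) ((div_le_iff₀ hs).2 h2)

/-- Quantitative form of slow variation. -/
def SVl (b : ℝ → ℝ) : Prop :=
  (∀ t, 0 < t → 0 < b t) ∧ ∀ ε : ℝ, 0 < ε → ∃ C : ℝ, 0 < C ∧
    ∀ s t, 0 < s → 0 < t → b s ≤ C * RR s t ^ ε * b t

theorem SlowlyVarying.svl {b : ℝ → ℝ} (h : SlowlyVarying b) : SVl b := by
  obtain ⟨-, hpos, h⟩ := h
  refine ⟨fun t ht => hpos t ht, fun ε hε => ?_⟩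
  obtain ⟨⟨g, hg, C, hC, hgC⟩, ⟨k, hk, D, hD, hkD⟩⟩ := h ε hε
  refine ⟨max (C * C) (D * D), lt_max_of_lt_left (by positivity), fun s t hs ht => ?_⟩
  have hbt := hpos t ht
  rcases le_total s t with hst | hst
  · rw [RR_of_le hs hst]
    have h1 := (hgC s hs).2
    have h2 := (hgC t ht).1
    have h3 := hg (show s ∈ Ioi (0:ℝ) from hs) (show t ∈ Ioi (0:ℝ) from ht) hst
    have h4 : s ^ ε * b s ≤ C * C * (t ^ ε * b t) := by
      have : g t ≤ C * (t ^ ε * b t) := by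
        rw [inv_mul_le_iff₀ hC] at h2; exact h2
      calc s ^ ε * b s ≤ C * g s := h1
        _ ≤ C * g t := by gcongr
        _ ≤ C * (C * (t ^ ε * b t)) := by gcongr
        _ = _ := by ring
    have hsp : 0 < s ^ ε := Real.rpow_pos_of_pos hs _
    have h5 : b s ≤ C * C * (t / s) ^ ε * b t := by
      rw [Real.div_rpow ht.le hs.le]
      rw [← mul_le_mul_iff_right₀ hsp]
      calc _ ≤ _ := h4
        _ = _ := by field_simp
    refine h5.trans ?_
    have : 0 < (t/s)^ε := by positivity
    gcongr
    exact le_max_left _ _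
  · rw [RR_of_ge ht hst]
    have h1 := (hkD s hs).2
    have h2 := (hkD t ht).1
    have h3 := hk (show t ∈ Ioi (0:ℝ) from ht) (show s ∈ Ioi (0:ℝ) from hs) hst
    have h4 : s ^ (-ε) * b s ≤ D * D * (t ^ (-ε) * b t) := by
      have : k t ≤ D * (t ^ (-ε) * b t) := by
        rw [inv_mul_le_iff₀ hD] at h2; exact h2
      calc s ^ (-ε) * b s ≤ D * k s := h1
        _ ≤ D * k t := by gcongr
        _ ≤ D * (D * (t ^ (-ε) * b t)) := by gcongr
        _ = _ := by ring
    have hsp : 0 < s ^ (-ε) := Real.rpow_pos_of_pos hs _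
    have h5 : b s ≤ D * D * (s / t) ^ ε * b t := by
      rw [Real.div_rpow hs.le ht.le]
      rw [← mul_le_mul_iff_right₀ hsp]
      calc _ ≤ _ := h4
        _ = _ := by
          rw [Real.rpow_neg hs.le, Real.rpow_neg ht.le]
          have : 0 < s ^ ε := by positivity
          field_simp
    refine h5.trans ?_
    have : 0 < (s/t)^ε := by positivity
    gcongr
    exact le_max_right _ _

theorem SVl.mul {b a : ℝ → ℝ} (hb : SVl b) (ha : SVl a) : SVl (fun t => b t * a t) := by
  refine ⟨fun t ht => mul_pos (hb.1 t ht) (ha.1 t ht), fun ε hε => ?_⟩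
  obtain ⟨C, hC, h1⟩ := hb.2 (ε/2) (half_pos hε)
  obtain ⟨D, hD, h2⟩ := ha.2 (ε/2) (half_pos hε)
  refine ⟨C * D, by positivity, fun s t hs ht => ?_⟩
  have hR := RR_pos hs ht
  have := mul_le_mul (h1 s t hs ht) (h2 s t hs ht) (ha.1 s hs).le
    (mul_nonneg (by positivity) (hb.1 t ht).le)
  refine this.trans (le_of_eq ?_)
  have e : RR s t ^ ε = RR s t ^ (ε/2) * RR s t ^ (ε/2) := by
    rw [← Real.rpow_add hR]; ring_nf
  rw [e]; ring

theorem SVl.inv {b : ℝ → ℝ} (hb : SVl b) : SVl (fun t => (b t)⁻¹) := by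
  refine ⟨fun t ht => inv_pos.2 (hb.1 t ht), fun ε hε => ?_⟩
  obtain ⟨C, hC, h1⟩ := hb.2 ε hε
  refine ⟨C, hC, fun s t hs ht => ?_⟩
  have h := h1 t s ht hs
  rw [RR_comm] at h
  have hs' := hb.1 s hs
  have ht' := hb.1 t ht
  rw [inv_le_iff_one_le_mul₀ hs']
  calc 1 = (b t)⁻¹ * b t := by field_simp
    _ ≤ (b t)⁻¹ * (C * RR s t ^ ε * b s) := by gcongr
    _ = _ := by ring

theorem SVl.div {b a : ℝ → ℝ} (hb : SVl b) (ha : SVl a) : SVl (fun t => b t / a t) := by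
  simpa [div_eq_mul_inv] using hb.mul ha.inv

theorem SVl.rpow {b : ℝ → ℝ} (hb : SVl b) {p : ℝ} (hp : 0 < p) : SVl (fun t => b t ^ p) := by
  refine ⟨fun t ht => Real.rpow_pos_of_pos (hb.1 t ht) _, fun ε hε => ?_⟩
  obtain ⟨C, hC, h1⟩ := hb.2 (ε/p) (div_pos hε hp)
  refine ⟨C ^ p, by positivity, fun s t hs ht => ?_⟩
  have hR := RR_pos hs ht
  have hs' := hb.1 s hs
  have ht' := hb.1 t ht
  calc b s ^ p ≤ (C * RR s t ^ (ε/p) * b t) ^ p := by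
        apply Real.rpow_le_rpow hs'.le (h1 s t hs ht) hp.le
    _ = _ := by
        rw [Real.mul_rpow (by positivity) ht'.le, Real.mul_rpow hC.le (by positivity),
          ← Real.rpow_mul hR.le]
        congr 3; field_simp

theorem RR_rpow {s t : ℝ} (hs : 0 < s) (ht : 0 < t) (p : ℝ) : s ^ p ≤ RR s t ^ |p| * t ^ p := by
  have htp : 0 < t ^ p := Real.rpow_pos_of_pos ht _
  rw [← div_le_iff₀ htp, ← Real.div_rpow hs.le ht.le]
  have hst : 0 < s / t := by positivity
  rcases le_total 0 p with h | h
  · rw [abs_of_nonneg h]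
    exact Real.rpow_le_rpow hst.le (le_max_left _ _) h
  · rw [abs_of_nonpos h]
    calc (s / t) ^ p = (t / s) ^ (-p) := by
          rw [Real.rpow_neg (by positivity), ← Real.inv_rpow (by positivity), inv_div]
      _ ≤ _ := Real.rpow_le_rpow (by positivity) (le_max_right _ _) (by linarith)

theorem SVl.comp {a S : ℝ → ℝ} {δ : ℝ} (ha : SVl a) (hS : SVl S) (hδ : 0 < δ) :
    SVl (fun t => a (t ^ δ * S t)) := by
  have hpos : ∀ t, 0 < t → 0 < t ^ δ * S t := fun t ht =>
    mul_pos (Real.rpow_pos_of_pos ht _) (hS.1 t ht)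
  refine ⟨fun t ht => ha.1 _ (hpos t ht), fun ε hε => ?_⟩
  obtain ⟨C, hC, h1⟩ := ha.2 (ε/(2*δ)) (by positivity)
  obtain ⟨D, hD, h2⟩ := hS.2 δ hδ
  refine ⟨C * D ^ (ε/(2*δ)), by positivity, fun s t hs ht => ?_⟩
  have key : ∀ s t, 0 < s → 0 < t →
      (s ^ δ * S s) / (t ^ δ * S t) ≤ D * RR s t ^ (2 * δ) := by
    intro s t hs ht
    have hR := RR_pos hs ht
    rw [div_le_iff₀ (hpos t ht)]
    have e1 := RR_rpow hs ht δ
    rw [abs_of_pos hδ] at e1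
    have e2 := h2 s t hs ht
    have := mul_le_mul e1 e2 (hS.1 s hs).le (by positivity)
    refine this.trans (le_of_eq ?_)
    have e : RR s t ^ (2*δ) = RR s t ^ δ * RR s t ^ δ := by
      rw [← Real.rpow_add hR]; ring_nf
    rw [e]; ring
  have hR := RR_pos hs ht
  have hR2 : RR (s ^ δ * S s) (t ^ δ * S t) ≤ D * RR s t ^ (2 * δ) := by
    apply max_le (key s t hs ht)
    have := key t s ht hs
    rwa [RR_comm t s] at this
  have hat := ha.1 _ (hpos t ht)
  calc a (s ^ δ * S s) ≤ C * RR (s ^ δ * S s) (t ^ δ * S t) ^ (ε/(2*δ)) * a (t ^ δ * S t) :=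
        h1 _ _ (hpos s hs) (hpos t ht)
    _ ≤ C * (D * RR s t ^ (2 * δ)) ^ (ε/(2*δ)) * a (t ^ δ * S t) := by
        have := (RR_pos (hpos s hs) (hpos t ht)).le
        gcongr
    _ = _ := by
        rw [Real.mul_rpow hD.le (by positivity), ← Real.rpow_mul hR.le]
        have : 2 * δ * (ε / (2*δ)) = ε := by field_simp
        rw [this]; ring

/-- Block comparability of `t ^ p * S t`. -/
theorem SVl.block {S : ℝ → ℝ} (hS : SVl S) (p : ℝ) (L : ℝ) (hL : 0 < L) :
    ∃ C : ℝ, 0 < C ∧ ∀ s t, 0 < s → 0 < t → RR s t ≤ L →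
      s ^ p * S s ≤ C * (t ^ p * S t) := by
  obtain ⟨C, hC, h⟩ := hS.2 1 one_pos
  refine ⟨L ^ |p| * (C * L ^ (1:ℝ)), by positivity, fun s t hs ht hR => ?_⟩
  have hR0 := RR_pos hs ht
  have hSt := hS.1 t ht
  have htp : 0 < t ^ p := by positivity
  have e1 : s ^ p ≤ L ^ |p| * t ^ p := (RR_rpow hs ht p).trans (by gcongr)
  have e2 : S s ≤ C * L ^ (1:ℝ) * S t := (h s t hs ht).trans (by gcongr)
  calc s ^ p * S s ≤ (L ^ |p| * t ^ p) * (C * L ^ (1:ℝ) * S t) :=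
        mul_le_mul e1 e2 (hS.1 s hs).le (by positivity)
    _ = _ := by ring

end basics

section lq

theorem toReal_inv_pos {q : ℝ≥0∞} (hq : 0 < q) (hq' : q ≠ ∞) :
    0 < q.toReal ∧ q⁻¹.toReal = q.toReal⁻¹ :=
  ⟨ENNReal.toReal_pos hq.ne' hq', ENNReal.toReal_inv q⟩

theorem LqNorm_mono {q : ℝ≥0∞} {s : Set ℝ} (hs : MeasurableSet s) {f g : ℝ → ℝ≥0∞}
    (h : ∀ u ∈ s, f u ≤ g u) : LqNorm q s f ≤ LqNorm q s g := by
  unfold LqNorm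
  split_ifs
  · exact essSup_mono_ae ((ae_restrict_iff' hs).2 (ae_of_all _ h))
  · refine ENNReal.rpow_le_rpow ?_ ENNReal.toReal_nonneg
    exact setLIntegral_mono' hs fun u hu => ENNReal.rpow_le_rpow (h u hu) ENNReal.toReal_nonneg

theorem LqNorm_mono_set {q : ℝ≥0∞} {s t : Set ℝ} (hst : s ⊆ t) (f : ℝ → ℝ≥0∞) :
    LqNorm q s f ≤ LqNorm q t f := by
  unfold LqNorm
  split_ifs
  · exact essSup_mono_measure' (Measure.restrict_mono hst le_rfl)
  · refine ENNReal.rpow_le_rpow ?_ ENNReal.toReal_nonneg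
    exact lintegral_mono_set hst

theorem LqNorm_const_mul_le {q : ℝ≥0∞} (hq : 0 < q) {s : Set ℝ} {c : ℝ≥0∞} (hc : c ≠ ∞)
    (f : ℝ → ℝ≥0∞) : LqNorm q s (fun u => c * f u) ≤ c * LqNorm q s f := by
  unfold LqNorm
  split_ifs with h
  · exact ENNReal.essSup_const_mul.le
  · obtain ⟨h1, h2⟩ := toReal_inv_pos hq h
    simp_rw [ENNReal.mul_rpow_of_nonneg _ _ h1.le]
    rw [lintegral_const_mul' _ _ (ENNReal.rpow_ne_top_of_nonneg h1.le hc),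
      ENNReal.mul_rpow_of_nonneg _ _ ENNReal.toReal_nonneg, ← ENNReal.rpow_mul, h2,
      mul_inv_cancel₀ h1.ne', ENNReal.rpow_one]

theorem le_LqNorm_const_mul {q : ℝ≥0∞} (hq : 0 < q) {s : Set ℝ} (c : ℝ≥0∞)
    (f : ℝ → ℝ≥0∞) : c * LqNorm q s f ≤ LqNorm q s (fun u => c * f u) := by
  unfold LqNorm
  split_ifs with h
  · exact ENNReal.essSup_const_mul.ge
  · obtain ⟨h1, h2⟩ := toReal_inv_pos hq h
    simp_rw [ENNReal.mul_rpow_of_nonneg _ _ h1.le]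
    calc c * (∫⁻ t in s, f t ^ q.toReal) ^ q⁻¹.toReal
        = (c ^ q.toReal * ∫⁻ t in s, f t ^ q.toReal) ^ q⁻¹.toReal := by
          rw [ENNReal.mul_rpow_of_nonneg _ _ ENNReal.toReal_nonneg, ← ENNReal.rpow_mul, h2,
            mul_inv_cancel₀ h1.ne', ENNReal.rpow_one]
      _ ≤ _ := ENNReal.rpow_le_rpow (lintegral_const_mul_le _ _) ENNReal.toReal_nonneg

theorem LqNorm_union (q : ℝ≥0∞) : ∃ C : ℝ≥0∞, C ≠ ∞ ∧ ∀ (s t : Set ℝ) (f : ℝ → ℝ≥0∞)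
    (B : ℝ≥0∞), LqNorm q s f ≤ B → LqNorm q t f ≤ B → LqNorm q (s ∪ t) f ≤ C * B := by
  by_cases h : q = ∞
  · refine ⟨1, by simp, fun s t f B h1 h2 => ?_⟩
    simp only [LqNorm, h, if_true] at *
    rw [one_mul]
    refine essSup_le_of_ae_le _ ?_
    have e1 := ENNReal.ae_le_essSup (μ := volume.restrict s) f
    have e2 := ENNReal.ae_le_essSup (μ := volume.restrict t) f
    refine (ae_restrict_union_iff s t _).2 ⟨?_, ?_⟩
    · filter_upwards [e1] with x hx using hx.trans h1
    · filter_upwards [e2] with x hx using hx.trans h2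
  · rcases eq_or_ne q 0 with h0 | h0
    · refine ⟨1, by simp, fun s t f B h1 h2 => ?_⟩
      simpa [LqNorm, h0] using h1
    obtain ⟨k1, k2⟩ := toReal_inv_pos (pos_iff_ne_zero.2 h0) h
    refine ⟨2 ^ q⁻¹.toReal, ENNReal.rpow_ne_top_of_nonneg ENNReal.toReal_nonneg (by simp),
      fun s t f B h1 h2 => ?_⟩
    simp only [LqNorm, h, if_false] at *
    have key : ∀ I : ℝ≥0∞, I ^ q⁻¹.toReal ≤ B → I ≤ B ^ q.toReal := by
      intro I hI
      have := ENNReal.rpow_le_rpow hI k1.le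
      rwa [← ENNReal.rpow_mul, k2, inv_mul_cancel₀ k1.ne', ENNReal.rpow_one] at this
    calc (∫⁻ x in s ∪ t, f x ^ q.toReal) ^ q⁻¹.toReal
        ≤ (2 * B ^ q.toReal) ^ q⁻¹.toReal := by
          refine ENNReal.rpow_le_rpow ?_ ENNReal.toReal_nonneg
          refine (lintegral_union_le _ _ _).trans ?_
          rw [two_mul]
          exact add_le_add (key _ h1) (key _ h2)
      _ = _ := by
          rw [ENNReal.mul_rpow_of_nonneg _ _ ENNReal.toReal_nonneg, ← ENNReal.rpow_mul, k2,
            mul_inv_cancel₀ k1.ne', ENNReal.rpow_one]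

theorem ofReal_wt_rpow {q : ℝ≥0∞} (hq : 0 < q) (hq' : q ≠ ∞) {u : ℝ} (hu : 0 < u) (y : ℝ≥0∞) :
    (ENNReal.ofReal (u ^ (-(q⁻¹.toReal))) * y) ^ q.toReal = ENNReal.ofReal u⁻¹ * y ^ q.toReal := by
  obtain ⟨h1, h2⟩ := toReal_inv_pos hq hq'
  rw [ENNReal.mul_rpow_of_nonneg _ _ h1.le, ENNReal.ofReal_rpow_of_pos (by positivity),
    ← Real.rpow_mul hu.le, h2]
  congr 2
  rw [neg_mul, inv_mul_cancel₀ h1.ne', Real.rpow_neg_one]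

/-- Single-block lower estimate. -/
theorem block_lower {q : ℝ≥0∞} (hq : 0 < q) {t s : ℝ} (ht : 0 < t) (hts : 2 * t ≤ s)
    {F : ℝ → ℝ≥0∞} {Y : ℝ≥0∞}
    (h : ∀ u ∈ Ioo t s, ENNReal.ofReal (u ^ (-(q⁻¹.toReal))) * Y ≤ F u) :
    Y ≤ 2 ^ q⁻¹.toReal * LqNorm q (Ioo t s) F := by
  have hs : 0 < s := by linarith
  have hvol : volume (Ioo t s) ≠ 0 := by
    rw [Real.volume_Ioo]; simp; linarith
  unfold LqNorm
  split_ifs with hq'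
  · simp only [hq', ENNReal.inv_top, ENNReal.toReal_zero, neg_zero, Real.rpow_zero,
      ENNReal.ofReal_one, one_mul, ENNReal.rpow_zero] at h ⊢
    have e := ENNReal.ae_le_essSup (μ := volume.restrict (Ioo t s)) F
    rw [ae_restrict_iff' measurableSet_Ioo] at e
    by_contra hcon
    apply hvol
    refine measure_mono_null ?_ e
    intro u hu hh
    exact hcon ((h u hu).trans (hh hu))
  · obtain ⟨h1, h2⟩ := toReal_inv_pos hq hq'
    have key : Y ^ q.toReal ≤ 2 * ∫⁻ x in Ioo t s, F x ^ q.toReal := by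
      calc Y ^ q.toReal = 2 * (ENNReal.ofReal (1/2) * Y ^ q.toReal) := by
            rw [← mul_assoc]
            have : (2:ℝ≥0∞) * ENNReal.ofReal (1/2) = 1 := by
              rw [show (2:ℝ≥0∞) = ENNReal.ofReal 2 by simp, ← ENNReal.ofReal_mul (by norm_num)]
              norm_num
            rw [this, one_mul]
        _ ≤ 2 * ((ENNReal.ofReal s⁻¹ * Y ^ q.toReal) * volume (Ioo t s)) := by
            gcongr 2 * ?_
            rw [Real.volume_Ioo, mul_right_comm, ← ENNReal.ofReal_mul (by positivity)]
            gcongr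
            rw [inv_mul_eq_div, le_div_iff₀ hs]; linarith
        _ = 2 * ∫⁻ x in Ioo t s, (ENNReal.ofReal s⁻¹ * Y ^ q.toReal) := by
            rw [setLIntegral_const]
        _ ≤ _ := by
            gcongr 2 * ?_
            refine setLIntegral_mono' measurableSet_Ioo fun u hu => ?_
            have hu0 : 0 < u := ht.trans hu.1
            refine le_trans ?_ (ENNReal.rpow_le_rpow (h u hu) h1.le)
            rw [ofReal_wt_rpow hq hq' hu0]
            gcongr
            exact hu.2.le
    have := ENNReal.rpow_le_rpow key (z := q⁻¹.toReal) ENNReal.toReal_nonneg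
    rwa [ENNReal.mul_rpow_of_nonneg _ _ ENNReal.toReal_nonneg, ← ENNReal.rpow_mul, h2,
      mul_inv_cancel₀ h1.ne', ENNReal.rpow_one, ← h2] at this

/-- The `ℓ_r` quasi-norm over `ℤ`. -/
def lr (r : ℝ≥0∞) (y : ℤ → ℝ≥0∞) : ℝ≥0∞ :=
  if r = ∞ then ⨆ k, y k else (∑' k, y k ^ r.toReal) ^ r⁻¹.toReal

theorem lr_mono {r : ℝ≥0∞} {x y : ℤ → ℝ≥0∞} (h : ∀ k, x k ≤ y k) : lr r x ≤ lr r y := by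
  unfold lr
  split_ifs
  · exact iSup_mono h
  · exact ENNReal.rpow_le_rpow (ENNReal.tsum_le_tsum fun k =>
      ENNReal.rpow_le_rpow (h k) ENNReal.toReal_nonneg) ENNReal.toReal_nonneg

theorem lr_const_mul {r : ℝ≥0∞} (hr : 0 < r) (c : ℝ≥0∞) (x : ℤ → ℝ≥0∞) :
    lr r (fun k => c * x k) = c * lr r x := by
  unfold lr
  split_ifs with h
  · rw [ENNReal.mul_iSup]
  · obtain ⟨h1, h2⟩ := toReal_inv_pos hr h
    simp_rw [ENNReal.mul_rpow_of_nonneg _ _ h1.le]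
    rw [ENNReal.tsum_mul_left, ENNReal.mul_rpow_of_nonneg _ _ ENNReal.toReal_nonneg,
      ← ENNReal.rpow_mul, h2, mul_inv_cancel₀ h1.ne', ENNReal.rpow_one]

structure Lac (M : ℝ) (ρ : ℤ → ℝ) : Prop where
  pos : ∀ k, 0 < ρ k
  lo : ∀ k, 2 * ρ k ≤ ρ (k + 1)
  hi : ∀ k, ρ (k + 1) ≤ M * ρ k

theorem Lac.strictMono {M : ℝ} {ρ : ℤ → ℝ} (h : Lac M ρ) : StrictMono ρ :=
  strictMono_int_of_lt_succ fun k => by linarith [h.pos k, h.lo k]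

theorem Lac.up {M : ℝ} {ρ : ℤ → ℝ} (h : Lac M ρ) (n : ℕ) (k : ℤ) : 2 ^ n * ρ k ≤ ρ (k + n) := by
  induction n with
  | zero => simp
  | succ n ih =>
    have := h.lo (k + n)
    push_cast
    rw [← add_assoc, pow_succ]
    linarith

theorem Lac.exists_mem {M : ℝ} {ρ : ℤ → ℝ} (h : Lac M ρ) {u : ℝ} (hu : 0 < u) :
    ∃ k, u ∈ Ico (ρ k) (ρ (k + 1)) := by
  have hb : ∃ b : ℤ, ∀ z : ℤ, ρ z ≤ u → z ≤ b := by
    obtain ⟨n, hn⟩ := pow_unbounded_of_one_lt (u / ρ 0) (one_lt_two)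
    refine ⟨n, fun z hz => ?_⟩
    by_contra hcon
    have h1 := h.strictMono.monotone (not_le.1 hcon).le
    have h2 := h.up n 0
    rw [zero_add] at h2
    rw [div_lt_iff₀ (h.pos 0)] at hn
    linarith
  have he : ∃ z : ℤ, ρ z ≤ u := by
    obtain ⟨n, hn⟩ := pow_unbounded_of_one_lt (ρ 0 / u) (one_lt_two)
    refine ⟨-n, ?_⟩
    have h2 := h.up n (-n)
    rw [neg_add_cancel] at h2
    rw [div_lt_iff₀ hu] at hn
    have : (0:ℝ) < 2 ^ n := by positivity
    nlinarith
  obtain ⟨k, hk, hk'⟩ := Int.exists_greatest_of_bdd hb he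
  refine ⟨k, hk, ?_⟩
  by_contra hcon
  have := hk' (k+1) (not_lt.1 hcon)
  omega

theorem D_upper {r : ℝ≥0∞} (hr : 0 < r) (M : ℝ) : ∃ C : ℝ≥0∞, C ≠ ∞ ∧
    ∀ ρ : ℤ → ℝ, Lac M ρ → ∀ (F : ℝ → ℝ≥0∞) (y : ℤ → ℝ≥0∞),
      (∀ k, ∀ u ∈ Ico (ρ k) (ρ (k+1)), F u ≤ ENNReal.ofReal (u ^ (-(r⁻¹.toReal))) * y k) →
      LqNorm r (Ioi 0) F ≤ C * lr r y := by
  refine ⟨ENNReal.ofReal M ^ r⁻¹.toReal,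
    ENNReal.rpow_ne_top_of_nonneg ENNReal.toReal_nonneg (by simp), fun ρ hρ F y h => ?_⟩
  unfold LqNorm lr
  split_ifs with hr'
  · simp only [hr', ENNReal.inv_top, ENNReal.toReal_zero, neg_zero, Real.rpow_zero,
      ENNReal.ofReal_one, one_mul, ENNReal.rpow_zero] at h ⊢
    refine essSup_le_of_ae_le _ ((ae_restrict_iff' measurableSet_Ioi).2 (ae_of_all _ ?_))
    intro u hu
    obtain ⟨k, hk⟩ := hρ.exists_mem hu
    exact (h k u hk).trans (le_iSup y k)
  · obtain ⟨h1, h2⟩ := toReal_inv_pos hr hr'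
    rw [← ENNReal.mul_rpow_of_nonneg _ _ ENNReal.toReal_nonneg]
    refine ENNReal.rpow_le_rpow ?_ ENNReal.toReal_nonneg
    have hsub : Ioi (0:ℝ) ⊆ ⋃ k, Ico (ρ k) (ρ (k+1)) := fun u hu => by
      obtain ⟨k, hk⟩ := hρ.exists_mem hu
      exact mem_iUnion.2 ⟨k, hk⟩
    refine (lintegral_mono_set hsub).trans ((lintegral_iUnion_le _ _).trans ?_)
    rw [← ENNReal.tsum_mul_left]
    refine ENNReal.tsum_le_tsum fun k => ?_
    have hk := hρ.pos k
    calc ∫⁻ u in Ico (ρ k) (ρ (k+1)), F u ^ r.toReal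
        ≤ ∫⁻ u in Ico (ρ k) (ρ (k+1)), (ENNReal.ofReal (ρ k)⁻¹ * y k ^ r.toReal) := by
          refine setLIntegral_mono' measurableSet_Ico fun u hu => ?_
          refine (ENNReal.rpow_le_rpow (h k u hu) h1.le).trans ?_
          rw [ofReal_wt_rpow hr hr' (hk.trans_le hu.1)]
          gcongr
          exact hu.1
      _ = ENNReal.ofReal ((ρ k)⁻¹ * (ρ (k+1) - ρ k)) * y k ^ r.toReal := by
          rw [setLIntegral_const, Real.volume_Ico, mul_right_comm,
            ← ENNReal.ofReal_mul (by positivity)]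
      _ ≤ _ := by
          gcongr
          rw [inv_mul_eq_div, div_le_iff₀ hk]
          linarith [hρ.hi k]

theorem D_lower {r : ℝ≥0∞} (hr : 0 < r) {M : ℝ} {ρ : ℤ → ℝ} (hρ : Lac M ρ) (F : ℝ → ℝ≥0∞)
    (y : ℤ → ℝ≥0∞)
    (h : ∀ k, ∀ u ∈ Ioo (ρ k) (ρ (k+1)), ENNReal.ofReal (u ^ (-(r⁻¹.toReal))) * y k ≤ F u) :
    lr r y ≤ 2 ^ r⁻¹.toReal * LqNorm r (Ioi 0) F := by
  have hb := fun k => block_lower hr (hρ.pos k) (hρ.lo k) (h k)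
  have hsub : ∀ k, Ioo (ρ k) (ρ (k+1)) ⊆ Ioi 0 := fun k u hu => (hρ.pos k).trans hu.1
  by_cases hr' : r = ∞
  · rw [lr, if_pos hr']
    refine iSup_le fun k => (hb k).trans ?_
    gcongr
    exact LqNorm_mono_set (hsub k) F
  · obtain ⟨h1, h2⟩ := toReal_inv_pos hr hr'
    simp only [lr, LqNorm, if_neg hr'] at hb ⊢
    rw [← ENNReal.mul_rpow_of_nonneg _ _ ENNReal.toReal_nonneg]
    refine ENNReal.rpow_le_rpow ?_ ENNReal.toReal_nonneg
    have hd : Pairwise (Function.onFun Disjoint fun k => Ioo (ρ k) (ρ (k+1))) := by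
      have := hρ.strictMono.monotone.pairwise_disjoint_on_Ioo_succ
      simpa [Order.succ_eq_add_one] using this
    calc ∑' k, y k ^ r.toReal
        ≤ ∑' k, 2 * ∫⁻ u in Ioo (ρ k) (ρ (k+1)), F u ^ r.toReal := by
          refine ENNReal.tsum_le_tsum fun k => ?_
          have := ENNReal.rpow_le_rpow (hb k) h1.le
          rwa [← ENNReal.mul_rpow_of_nonneg _ _ ENNReal.toReal_nonneg, ← ENNReal.rpow_mul, h2,
            inv_mul_cancel₀ h1.ne', ENNReal.rpow_one] at this
      _ = 2 * ∫⁻ u in ⋃ k, Ioo (ρ k) (ρ (k+1)), F u ^ r.toReal := by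
          rw [ENNReal.tsum_mul_left, lintegral_iUnion (fun k => measurableSet_Ioo) hd]
      _ ≤ _ := by
          gcongr 2 * ?_
          exact lintegral_mono_set (iUnion_subset hsub)

theorem tsum_natAbs {g : ℝ≥0∞} (hg : g < 1) : ∑' k : ℤ, g ^ k.natAbs ≠ ∞ := by
  have hg' : g ≠ ∞ := (hg.trans one_lt_top).ne
  lift g to NNReal using hg'
  have hg1 : g < 1 := by exact_mod_cast hg
  have hs : Summable fun n : ℕ => g ^ n := NNReal.summable_geometric hg1
  have hs' : Summable fun n : ℕ => (g : ℝ) ^ n := by exact_mod_cast NNReal.summable_coe.2 hs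
  have hr : Summable fun k : ℤ => (g : ℝ) ^ k.natAbs :=
    Summable.of_nat_of_neg (by simpa using hs') (by simpa using hs')
  have : Summable fun k : ℤ => g ^ k.natAbs := by
    rw [← NNReal.summable_coe]; simpa using hr
  have := ENNReal.tsum_coe_ne_top_iff_summable.2 this
  simpa using this

theorem Y_sup {r : ℝ≥0∞} (hr : 0 < r) {g : ℝ≥0∞} (hg : g < 1) : ∃ C : ℝ≥0∞, C ≠ ∞ ∧
    ∀ x : ℤ → ℝ≥0∞, lr r (fun k => ⨆ j, g ^ (k - j).natAbs * x j) ≤ C * lr r x := by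
  by_cases hr' : r = ∞
  · refine ⟨1, by simp, fun x => ?_⟩
    simp only [lr, if_pos hr', one_mul]
    refine iSup_le fun k => iSup_le fun j => ?_
    refine le_trans ?_ (le_iSup x j)
    exact mul_le_of_le_one_left' (pow_le_one' hg.le _)
  · obtain ⟨h1, h2⟩ := toReal_inv_pos hr hr'
    have hg1 : g ^ r.toReal < 1 := ENNReal.rpow_lt_one hg h1
    refine ⟨(∑' k : ℤ, (g ^ r.toReal) ^ k.natAbs) ^ r⁻¹.toReal,
      ENNReal.rpow_ne_top_of_nonneg ENNReal.toReal_nonneg (tsum_natAbs hg1), fun x => ?_⟩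
    simp only [lr, if_neg hr']
    rw [← ENNReal.mul_rpow_of_nonneg _ _ ENNReal.toReal_nonneg]
    refine ENNReal.rpow_le_rpow ?_ ENNReal.toReal_nonneg
    calc ∑' k, (⨆ j, g ^ (k - j).natAbs * x j) ^ r.toReal
        ≤ ∑' k, ∑' j, (g ^ r.toReal) ^ (k - j).natAbs * x j ^ r.toReal := by
          refine ENNReal.tsum_le_tsum fun k => ?_
          have : (⨆ j, g ^ (k - j).natAbs * x j) ≤
              (∑' j, (g ^ r.toReal) ^ (k - j).natAbs * x j ^ r.toReal) ^ r⁻¹.toReal := by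
            refine iSup_le fun j => ?_
            have e := ENNReal.le_tsum
              (f := fun j => (g ^ r.toReal) ^ (k - j).natAbs * x j ^ r.toReal) j
            have e2 := ENNReal.rpow_le_rpow e (z := r⁻¹.toReal) ENNReal.toReal_nonneg
            refine le_trans (le_of_eq ?_) e2
            rw [← ENNReal.rpow_natCast, ← ENNReal.rpow_natCast, ← ENNReal.rpow_mul,
              mul_comm r.toReal, ENNReal.rpow_mul, ← ENNReal.mul_rpow_of_nonneg _ _ h1.le,
              ← ENNReal.rpow_mul, h2, mul_inv_cancel₀ h1.ne', ENNReal.rpow_one]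
          have := ENNReal.rpow_le_rpow this h1.le
          rwa [← ENNReal.rpow_mul, h2, inv_mul_cancel₀ h1.ne', ENNReal.rpow_one] at this
      _ = ∑' j, ∑' k, (g ^ r.toReal) ^ (k - j).natAbs * x j ^ r.toReal := ENNReal.tsum_comm
      _ = ∑' j, (∑' k : ℤ, (g ^ r.toReal) ^ k.natAbs) * x j ^ r.toReal := by
          congr 1; ext j
          rw [ENNReal.tsum_mul_right]
          congr 1
          exact (Equiv.subRight j).tsum_eq (fun k : ℤ => (g ^ r.toReal) ^ k.natAbs)
      _ ≤ _ := by rw [ENNReal.tsum_mul_left]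

/-- Scale-invariant bump estimate. -/
theorem bump {q : ℝ≥0∞} (hq : 0 < q) {κ : ℝ} (hκ : 0 < κ) : ∃ C : ℝ≥0∞, C ≠ ∞ ∧
    ∀ (t : ℝ), 0 < t → ∀ (S : Set ℝ), MeasurableSet S → S ⊆ Ioi 0 → ∀ (F : ℝ → ℝ≥0∞) (Y : ℝ≥0∞),
      (∀ u ∈ S, F u ≤ ENNReal.ofReal (u ^ (-(q⁻¹.toReal))) * (ENNReal.ofReal (RR u t ^ (-κ)) * Y)) →
      LqNorm q S F ≤ C * Y := by
  obtain ⟨C, hC, hD⟩ := D_upper hq 2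
  set g : ℝ≥0∞ := ENNReal.ofReal (2 ^ (-κ)) with hgdef
  have hg : g < 1 := by
    rw [hgdef, ENNReal.ofReal_lt_one]
    exact Real.rpow_lt_one_of_one_lt_of_neg one_lt_two (by linarith)
  obtain ⟨C', hC', hY⟩ := Y_sup hq hg
  refine ⟨C * (ENNReal.ofReal (2 ^ κ) * C'), by finiteness, fun t ht S hS hS0 F Y h => ?_⟩
  set ρ : ℤ → ℝ := fun k => t * 2 ^ k with hρdef
  have hρ : Lac 2 ρ := by
    refine ⟨fun k => by simp only [hρdef]; positivity, fun k => ?_, fun k => ?_⟩ <;>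
    · simp only [hρdef]
      rw [zpow_add_one₀ two_ne_zero]
      exact le_of_eq (by ring)
  set x : ℤ → ℝ≥0∞ := fun j => if j = 0 then Y else 0 with hx
  have hlx : lr q x = Y := by
    unfold lr
    split_ifs with hq'
    · apply le_antisymm
      · refine iSup_le fun k => ?_
        simp only [hx]; split_ifs <;> simp
      · refine le_trans ?_ (le_iSup x 0)
        simp [hx]
    · obtain ⟨h1, h2⟩ := toReal_inv_pos hq hq'
      rw [tsum_eq_single 0]
      · rw [← ENNReal.rpow_mul, h2, mul_inv_cancel₀ h1.ne', ENNReal.rpow_one]; simp [hx]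
      · intro k hk; simp [hx, hk, h1]
  have hgx : ∀ k : ℤ, g ^ k.natAbs * Y ≤ ⨆ j, g ^ (k - j).natAbs * x j := fun k => by
    refine le_trans ?_ (le_iSup _ 0)
    simp [hx]
  set G : ℝ → ℝ≥0∞ := fun u =>
    ENNReal.ofReal (u ^ (-(q⁻¹.toReal))) * (ENNReal.ofReal (RR u t ^ (-κ)) * Y) with hG
  calc LqNorm q S F ≤ LqNorm q S G := LqNorm_mono hS h
    _ ≤ LqNorm q (Ioi 0) G := LqNorm_mono_set hS0 G
    _ ≤ C * lr q (fun k => ENNReal.ofReal (2 ^ κ) * ⨆ j, g ^ (k - j).natAbs * x j) := by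
        refine hD ρ hρ G _ fun k u hu => ?_
        simp only [hG]
        refine mul_le_mul' le_rfl ?_
        refine le_trans ?_ (mul_le_mul' le_rfl (hgx k))
        rw [← mul_assoc]
        gcongr ?_ * Y
        have hu0 : 0 < u := (hρ.pos k).trans_le hu.1
        have hR := one_le_RR hu0 ht
        have h2k : (2:ℝ) ^ k.natAbs ≤ 2 * RR u t := by
          rcases Int.natAbs_eq k with hk | hk
          · have e : (2:ℝ) ^ k.natAbs = (2:ℝ) ^ k := by
              conv_rhs => rw [hk]
              rw [zpow_natCast]
            have : (2:ℝ) ^ k ≤ RR u t := by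
              refine le_trans ?_ (le_max_left _ _)
              rw [le_div_iff₀ ht]
              have := hu.1
              simp only [hρdef] at this
              linarith
            rw [e]; linarith
          · have e : (2:ℝ) ^ k.natAbs = ((2:ℝ) ^ k)⁻¹ := by
              conv_rhs => rw [hk]
              rw [zpow_neg, zpow_natCast, inv_inv]
            have hp : (0:ℝ) < 2 ^ k := by positivity
            have : (2:ℝ) ^ k.natAbs ≤ 2 * (t / u) := by
              rw [e, inv_le_iff_one_le_mul₀ hp, mul_div_assoc', div_mul_eq_mul_div,
                one_le_div hu0]
              have := hu.2
              simp only [hρdef] at this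
              rw [zpow_add_one₀ two_ne_zero] at this
              linarith
            have h3 : t / u ≤ RR u t := le_max_right _ _
            linarith
        rw [hgdef, ← ENNReal.ofReal_pow (by positivity), ← ENNReal.ofReal_mul (by positivity)]
        apply ENNReal.ofReal_le_ofReal
        rw [← Real.rpow_natCast (2 ^ (-κ)), ← Real.rpow_mul (by norm_num), mul_comm (-κ),
          Real.rpow_mul (by norm_num), Real.rpow_natCast, Real.rpow_neg (by positivity),
          Real.rpow_neg (by positivity)]
        rw [inv_le_iff_one_le_mul₀ (by positivity)]
        have : ((2:ℝ) ^ k.natAbs) ^ κ ≤ 2 ^ κ * RR u t ^ κ := by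
          rw [← Real.mul_rpow (by norm_num) (by linarith)]
          exact Real.rpow_le_rpow (by positivity) h2k hκ.le
        have hp : 0 < ((2:ℝ) ^ k.natAbs) ^ κ := by positivity
        calc (1:ℝ) = (((2:ℝ) ^ k.natAbs) ^ κ)⁻¹ * ((2:ℝ) ^ k.natAbs) ^ κ := by field_simp
          _ ≤ (((2:ℝ) ^ k.natAbs) ^ κ)⁻¹ * (2 ^ κ * RR u t ^ κ) := by gcongr
          _ = _ := by ring
    _ ≤ C * (ENNReal.ofReal (2 ^ κ) * (C' * lr q x)) := by
        rw [lr_const_mul hq]; gcongr; exact hY x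
    _ = _ := by rw [hlx]; ring

end lq

section sv

/-- The weight norm on `(0,t)`. -/
def BB (r : ℝ≥0∞) (d : ℝ → ℝ) (t : ℝ) : ℝ≥0∞ := LqNorm r (Ioo 0 t) (svWgt r d)

theorem BB_low {r : ℝ≥0∞} (hr : 0 < r) {d : ℝ → ℝ} (hd : SVl d) :
    ∃ C : ℝ≥0∞, C ≠ ∞ ∧ ∀ t, 0 < t → ENNReal.ofReal (d t) ≤ C * BB r d t := by
  obtain ⟨C, hC, h⟩ := hd.block 0 2 two_pos
  refine ⟨ENNReal.ofReal C * 2 ^ r⁻¹.toReal, ENNReal.mul_ne_top (by simp)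
    (ENNReal.rpow_ne_top_of_nonneg ENNReal.toReal_nonneg (by simp)), fun t ht => ?_⟩
  have h1 : ENNReal.ofReal (d t / C) ≤
      2 ^ r⁻¹.toReal * LqNorm r (Ioo (t/2) t) (svWgt r d) := by
    refine block_lower hr (half_pos ht) (by linarith) fun u hu => ?_
    have hu0 : 0 < u := by linarith [hu.1]
    have e := h t u ht hu0 (RR_le ht hu0 (by linarith [hu.1]) (by linarith [hu.2]))
    simp only [Real.rpow_zero, one_mul] at e
    unfold svWgt
    rw [← ENNReal.ofReal_mul (by positivity)]
    apply ENNReal.ofReal_le_ofReal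
    gcongr
    rw [div_le_iff₀ hC]; linarith
  calc ENNReal.ofReal (d t) = ENNReal.ofReal C * ENNReal.ofReal (d t / C) := by
        rw [← ENNReal.ofReal_mul hC.le]; congr 1; field_simp
    _ ≤ ENNReal.ofReal C * (2 ^ r⁻¹.toReal * BB r d t) := by
        gcongr
        refine h1.trans ?_
        gcongr
        exact LqNorm_mono_set (Ioo_subset_Ioo_left (by linarith)) _
    _ = _ := by ring

theorem BB_grow {r : ℝ≥0∞} (hr : 0 < r) {d : ℝ → ℝ} (hd : SVl d) {ε : ℝ} (hε : 0 < ε) :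
    ∃ C : ℝ≥0∞, C ≠ ∞ ∧ ∀ s t, 0 < s → s ≤ t →
      BB r d t ≤ C * (ENNReal.ofReal ((t/s)^ε) * BB r d s) := by
  obtain ⟨C1, hC1, h1⟩ := BB_low hr hd
  obtain ⟨C2, hC2, h2⟩ := hd.2 ε hε
  obtain ⟨C3, hC3, h3⟩ := bump hr hε
  obtain ⟨C4, hC4, h4⟩ := LqNorm_union r
  refine ⟨C4 * (1 + C3 * ENNReal.ofReal C2 * C1), by finiteness, fun s t hs hst => ?_⟩
  have ht : 0 < t := hs.trans_le hst
  have hds := hd.1 s hs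
  have hsub : Ioo 0 t ⊆ Ioo 0 s ∪ Ico s t := fun u hu => by
    rcases lt_or_ge u s with h | h
    · exact Or.inl ⟨hu.1, h⟩
    · exact Or.inr ⟨h, hu.2⟩
  have hone : 1 ≤ ENNReal.ofReal ((t/s)^ε) := by
    rw [ENNReal.one_le_ofReal]
    exact Real.one_le_rpow ((one_le_div hs).2 hst) hε.le
  refine (LqNorm_mono_set hsub _).trans ?_
  rw [mul_assoc]
  refine h4 _ _ _ _ ?_ ?_
  · calc BB r d s = 1 * (1 * BB r d s) := by simp
      _ ≤ _ := by gcongr; exact le_self_add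
  · have e : LqNorm r (Ico s t) (svWgt r d) ≤
        C3 * (ENNReal.ofReal C2 * ENNReal.ofReal ((t/s)^ε) * ENNReal.ofReal (d s)) := by
      refine h3 t ht _ measurableSet_Ico (fun u hu => hs.trans_le hu.1) _ _ fun u hu => ?_
      have hu0 : 0 < u := hs.trans_le hu.1
      unfold svWgt
      rw [← ENNReal.ofReal_mul hC2.le, ← ENNReal.ofReal_mul (by positivity),
        ← ENNReal.ofReal_mul (by have := RR_pos hu0 ht; positivity),
        ← ENNReal.ofReal_mul (by positivity)]
      apply ENNReal.ofReal_le_ofReal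
      gcongr
      refine (h2 u s hu0 hs).trans (le_of_eq ?_)
      rw [RR_of_ge hs hu.1, RR_of_le hu0 hu.2.le, Real.rpow_neg (by positivity),
        ← Real.inv_rpow (by positivity), inv_div]
      have : u / s = (u / t) * (t / s) := by field_simp
      rw [this, Real.mul_rpow (by positivity) (by positivity)]
      ring
    calc _ ≤ _ := e
      _ ≤ C3 * (ENNReal.ofReal C2 * ENNReal.ofReal ((t/s)^ε) * (C1 * BB r d s)) := by
          gcongr; exact h1 s hs
      _ = (C3 * ENNReal.ofReal C2 * C1) * (ENNReal.ofReal ((t/s)^ε) * BB r d s) := by ring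
      _ ≤ _ := by gcongr; exact le_add_self

theorem BB_mono {r : ℝ≥0∞} {d : ℝ → ℝ} {s t : ℝ} (hst : s ≤ t) : BB r d s ≤ BB r d t :=
  LqNorm_mono_set (Ioo_subset_Ioo_right hst) _

theorem BB_fin {r : ℝ≥0∞} (hr : 0 < r) {d : ℝ → ℝ} (hd : SVl d) (h1 : BB r d 1 ≠ ∞) (t : ℝ) :
    BB r d t ≠ ∞ := by
  rcases le_total t 1 with h | h
  · exact ne_top_of_le_ne_top h1 (BB_mono h)
  · obtain ⟨C, hC, h2⟩ := BB_grow hr hd one_pos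
    refine ne_top_of_le_ne_top ?_ (h2 1 t one_pos h)
    finiteness

theorem BB_pos {r : ℝ≥0∞} (hr : 0 < r) {d : ℝ → ℝ} (hd : SVl d) {t : ℝ} (ht : 0 < t) :
    BB r d t ≠ 0 := by
  obtain ⟨C, hC, h⟩ := BB_low hr hd
  intro h0
  have := h t ht
  rw [h0, mul_zero] at this
  have hd' := hd.1 t ht
  simp only [nonpos_iff_eq_zero, ENNReal.ofReal_eq_zero] at this
  linarith

theorem BB_svl {r : ℝ≥0∞} (hr : 0 < r) {d : ℝ → ℝ} (hd : SVl d) (h1 : BB r d 1 ≠ ∞) :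
    SVl (fun t => (BB r d t).toReal) := by
  refine ⟨fun t ht => ENNReal.toReal_pos (BB_pos hr hd ht) (BB_fin hr hd h1 t), fun ε hε => ?_⟩
  obtain ⟨C, hC, h2⟩ := BB_grow hr hd hε
  refine ⟨C.toReal + 1, by positivity, fun s t hs ht => ?_⟩
  have hR := one_le_RR hs ht
  have hRe : 1 ≤ RR s t ^ ε := Real.one_le_rpow hR hε.le
  have hft := BB_fin hr hd h1 t
  rcases le_total s t with h | h
  · have e : (BB r d s).toReal ≤ (BB r d t).toReal := ENNReal.toReal_mono hft (BB_mono h)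
    refine e.trans (le_mul_of_one_le_left ENNReal.toReal_nonneg ?_)
    have := ENNReal.toReal_nonneg (a := C)
    nlinarith
  · have e := ENNReal.toReal_mono (by finiteness) (h2 t s ht h)
    rw [ENNReal.toReal_mul, ENNReal.toReal_mul, ENNReal.toReal_ofReal (by positivity)] at e
    rw [RR_of_ge ht h]
    refine e.trans ?_
    rw [← mul_assoc]
    gcongr
    linarith

/-- The lattice functional underlying `normR`. -/
def phi (σ : ℝ) (r q : ℝ≥0∞) (b a : ℝ → ℝ) (h : ℝ → ℝ≥0∞) : ℝ≥0∞ :=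
  LqNorm r (Ioi 0) fun t =>
    ENNReal.ofReal (t ^ (-(r⁻¹.toReal)) * (b t / a t)) *
      LqNorm q (Ioi t) fun u => ENNReal.ofReal (u ^ (-σ - q⁻¹.toReal) * a u) * h u

theorem inner_upper {q : ℝ≥0∞} (hq : 0 < q) {a : ℝ → ℝ} (ha : SVl a) {σ α β : ℝ}
    (hα : σ < α) (hβ : β < σ) : ∃ C : ℝ≥0∞, C ≠ ∞ ∧ ∀ s t, 0 ≤ s → 0 < t →
      ∀ (h : ℝ → ℝ≥0∞) (H : ℝ≥0∞),
      (∀ u, s < u → u ≤ t → h u ≤ H * ENNReal.ofReal ((u/t)^α)) →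
      (∀ u, s < u → t ≤ u → h u ≤ H * ENNReal.ofReal ((u/t)^β)) →
      LqNorm q (Ioi s) (fun u => ENNReal.ofReal (u ^ (-σ - q⁻¹.toReal) * a u) * h u) ≤
        C * (H * ENNReal.ofReal (t ^ (-σ) * a t)) := by
  set κ := min (α - σ) (σ - β) / 2 with hκdef
  have hκ : 0 < κ := half_pos (lt_min (by linarith) (by linarith))
  have hκ1 : 2 * κ ≤ α - σ := by rw [hκdef]; linarith [min_le_left (α - σ) (σ - β)]
  have hκ2 : 2 * κ ≤ σ - β := by rw [hκdef]; linarith [min_le_right (α - σ) (σ - β)]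
  obtain ⟨C1, hC1, h1⟩ := bump hq hκ
  obtain ⟨C2, hC2, h2⟩ := ha.2 κ hκ
  refine ⟨C1 * ENNReal.ofReal C2, by finiteness, fun s t hs ht h H hl hu => ?_⟩
  rw [mul_assoc]
  refine h1 t ht _ measurableSet_Ioi (fun u hu => hs.trans_lt hu) _ _ fun u hus => ?_
  have hu0 : 0 < u := hs.trans_lt hus
  have hR := RR_pos hu0 ht
  have hat := ha.1 t ht
  have hau := ha.1 u hu0
  -- the real inequality
  have key : ∀ p : ℝ, (u/t) ^ p * RR u t ^ κ ≤ (u/t) ^ σ * RR u t ^ (-κ) →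
      h u ≤ H * ENNReal.ofReal ((u/t)^p) →
      ENNReal.ofReal (u ^ (-σ - q⁻¹.toReal) * a u) * h u ≤
      ENNReal.ofReal (u ^ (-(q⁻¹.toReal))) * (ENNReal.ofReal (RR u t ^ (-κ)) *
        (ENNReal.ofReal C2 * (H * ENNReal.ofReal (t ^ (-σ) * a t)))) := by
    intro p hp hh
    calc ENNReal.ofReal (u ^ (-σ - q⁻¹.toReal) * a u) * h u
        ≤ ENNReal.ofReal (u ^ (-σ - q⁻¹.toReal) * a u) * (H * ENNReal.ofReal ((u/t)^p)) := by
          gcongr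
      _ = H * ENNReal.ofReal (u ^ (-σ - q⁻¹.toReal) * a u * (u/t)^p) := by
          rw [ENNReal.ofReal_mul (p := u ^ (-σ - q⁻¹.toReal) * a u) (by positivity)]; ring
      _ ≤ H * ENNReal.ofReal (u ^ (-(q⁻¹.toReal)) * (RR u t ^ (-κ) *
            (C2 * (t ^ (-σ) * a t)))) := by
          gcongr H * ENNReal.ofReal ?_
          have e1 : u ^ (-σ - q⁻¹.toReal) = u ^ (-(q⁻¹.toReal)) * u ^ (-σ) := by
            rw [← Real.rpow_add hu0]; ring_nf
          rw [e1, mul_assoc, mul_assoc]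
          refine mul_le_mul_of_nonneg_left ?_ (by positivity)
          calc u ^ (-σ) * (a u * (u/t)^p)
              ≤ u ^ (-σ) * ((C2 * RR u t ^ κ * a t) * (u/t)^p) := by
                gcongr; exact h2 u t hu0 ht
            _ = u ^ (-σ) * C2 * a t * ((u/t)^p * RR u t ^ κ) := by ring
            _ ≤ u ^ (-σ) * C2 * a t * ((u/t) ^ σ * RR u t ^ (-κ)) := by gcongr
            _ = _ := by
                rw [Real.div_rpow hu0.le ht.le, Real.rpow_neg hu0.le, Real.rpow_neg ht.le]
                have : 0 < u ^ σ := by positivity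
                field_simp
      _ = _ := by
          rw [ENNReal.ofReal_mul (by positivity), ENNReal.ofReal_mul (by positivity),
            ENNReal.ofReal_mul hC2.le]
          ring
  have hx : 0 < u / t := by positivity
  rcases le_total u t with hut | hut
  · refine key α ?_ (hl u hus hut)
    have e : RR u t = (u/t)⁻¹ := by rw [RR_of_le hu0 hut, inv_div]
    rw [e, Real.inv_rpow hx.le, ← Real.rpow_neg hx.le, Real.inv_rpow hx.le, ← Real.rpow_neg hx.le,
      ← Real.rpow_add hx, ← Real.rpow_add hx]
    exact Real.rpow_le_rpow_of_exponent_ge hx ((div_le_one ht).2 hut) (by linarith)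
  · refine key β ?_ (hu u hus hut)
    rw [RR_of_ge ht hut, ← Real.rpow_add hx, ← Real.rpow_add hx]
    exact Real.rpow_le_rpow_of_exponent_le ((one_le_div ht).2 hut) (by linarith)

theorem phi_upper {r q : ℝ≥0∞} (hr : 0 < r) (hq : 0 < q) {a b : ℝ → ℝ} (ha : SVl a) (hb : SVl b)
    {σ α β : ℝ} (hα : σ < α) (hβ : β < σ)
    (hfin : BB r (fun s => b s / a s) 1 ≠ ∞) :
    ∃ C : ℝ≥0∞, C ≠ ∞ ∧ ∀ t, 0 < t → ∀ (h : ℝ → ℝ≥0∞) (H : ℝ≥0∞), H ≠ ∞ →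
      (∀ u, 0 < u → u ≤ t → h u ≤ H * ENNReal.ofReal ((u/t)^α)) →
      (∀ u, t ≤ u → h u ≤ H * ENNReal.ofReal ((u/t)^β)) →
      phi σ r q b a h ≤
        C * (H * ENNReal.ofReal (t ^ (-σ) * (a t * (BB r (fun s => b s / a s) t).toReal))) := by
  have hd := hb.div ha
  set d : ℝ → ℝ := fun s => b s / a s with hddef
  obtain ⟨C1, hC1, h1⟩ := inner_upper hq ha hα hβ
  set κ := (σ - β) / 2 with hκdef
  have hκ : 0 < κ := half_pos (by linarith)
  obtain ⟨C2, hC2, h2⟩ := bump hr hκ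
  obtain ⟨C3, hC3, h3⟩ := hb.2 κ hκ
  obtain ⟨C4, hC4, h4⟩ := BB_low hr hd
  obtain ⟨C5, hC5, h5⟩ := LqNorm_union r
  refine ⟨C5 * (C1 + C2 * (C1 * ENNReal.ofReal C3) * C4), by finiteness,
    fun t ht h H hH hl hu => ?_⟩
  have hat := ha.1 t ht
  have hbt := hb.1 t ht
  have hBt := BB_fin hr hd hfin t
  have hcc : ENNReal.ofReal (t ^ (-σ) * (a t * (BB r d t).toReal)) =
      ENNReal.ofReal (t ^ (-σ) * a t) * BB r d t := by
    rw [← mul_assoc, ENNReal.ofReal_mul (by positivity), ENNReal.ofReal_toReal hBt]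
  rw [hcc]
  have hsub : Ioi (0:ℝ) ⊆ Ioo 0 t ∪ Ici t := fun u hu => by
    rcases lt_or_ge u t with h | h
    · exact Or.inl ⟨hu, h⟩
    · exact Or.inr h
  unfold phi
  refine (LqNorm_mono_set hsub _).trans ?_
  rw [mul_assoc]
  refine h5 _ _ _ _ ?_ ?_
  · calc _ ≤ LqNorm r (Ioo 0 t) (fun s =>
            (C1 * (H * ENNReal.ofReal (t ^ (-σ) * a t))) * svWgt r d s) := by
          refine LqNorm_mono measurableSet_Ioo fun s hs => ?_
          rw [mul_comm]
          unfold svWgt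
          gcongr
          exact h1 s t hs.1.le ht h H (fun u hu' => hl u (hs.1.trans hu')) (fun u _ => hu u)
      _ ≤ (C1 * (H * ENNReal.ofReal (t ^ (-σ) * a t))) * BB r d t :=
          LqNorm_const_mul_le hr (by finiteness) _
      _ = C1 * (H * (ENNReal.ofReal (t ^ (-σ) * a t) * BB r d t)) := by ring
      _ ≤ _ := by gcongr; exact le_self_add
  · have e : ∀ F : ℝ → ℝ≥0∞, (∀ s ∈ Ici t, F s ≤
        ENNReal.ofReal (s ^ (-(r⁻¹.toReal)) * d s) *
          (C1 * (H * ENNReal.ofReal ((s/t)^β) * ENNReal.ofReal (s ^ (-σ) * a s)))) →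
        LqNorm r (Ici t) F ≤ C2 * ((C1 * ENNReal.ofReal C3) * H *
          ENNReal.ofReal (t ^ (-σ) * b t)) := by
      intro F hF
      refine h2 t ht _ measurableSet_Ici (fun s hs => ht.trans_le hs) _ _ fun s hs => ?_
      refine (hF s hs).trans ?_
      have hs0 : 0 < s := ht.trans_le hs
      have has := ha.1 s hs0
      have hbs := hb.1 s hs0
      have hR := RR_pos hs0 ht
      have hx : 0 < s / t := by positivity
      calc ENNReal.ofReal (s ^ (-(r⁻¹.toReal)) * d s) *
          (C1 * (H * ENNReal.ofReal ((s/t)^β) * ENNReal.ofReal (s ^ (-σ) * a s)))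
          = C1 * H * ENNReal.ofReal (s ^ (-(r⁻¹.toReal)) * d s * ((s/t)^β * (s ^ (-σ) * a s))) := by
            rw [ENNReal.ofReal_mul (p := s ^ (-(r⁻¹.toReal)) * d s)
              (by simp only [hddef]; positivity),
              ENNReal.ofReal_mul (p := (s/t)^β) (by positivity)]
            ring
        _ ≤ C1 * H * ENNReal.ofReal (s ^ (-(r⁻¹.toReal)) * (RR s t ^ (-κ) *
              (C3 * (t ^ (-σ) * b t)))) := by
            gcongr C1 * H * ENNReal.ofReal ?_
            rw [mul_assoc]
            refine mul_le_mul_of_nonneg_left ?_ (by positivity)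
            calc d s * ((s/t)^β * (s ^ (-σ) * a s)) = (s/t)^β * s ^ (-σ) * b s := by
                  simp only [hddef]; field_simp
              _ ≤ (s/t)^β * s ^ (-σ) * (C3 * RR s t ^ κ * b t) := by
                  gcongr; exact h3 s t hs0 ht
              _ = _ := by
                  rw [RR_of_ge ht hs]
                  have e1 : s ^ (-σ) = (s/t) ^ (-σ) * t ^ (-σ) := by
                    rw [← Real.mul_rpow hx.le ht.le]; congr 1; field_simp
                  have e2 : (s/t) ^ (-κ) = (s/t)^β * (s/t) ^ (-σ) * (s/t) ^ κ := by
                    rw [← Real.rpow_add hx, ← Real.rpow_add hx]; congr 1; rw [hκdef]; ring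
                  rw [e1, e2]; ring
        _ = _ := by
            rw [ENNReal.ofReal_mul (by positivity), ENNReal.ofReal_mul (by positivity),
              ENNReal.ofReal_mul hC3.le]
            ring
    refine (e _ fun s hs => ?_).trans ?_
    · gcongr
      have hs0 : 0 < s := ht.trans_le hs
      refine h1 s s hs0.le hs0 h (H * ENNReal.ofReal ((s/t)^β)) (fun u h1 h2 => absurd h1 (not_lt.2 h2))
        fun u hu1 hu2 => ?_
      refine (hu u (le_trans hs hu2)).trans (le_of_eq ?_)
      have hu0 : 0 < u := hs0.trans hu1
      rw [mul_assoc, ← ENNReal.ofReal_mul (by positivity), ← Real.mul_rpow (by positivity) (by positivity)]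
      congr 3; field_simp
    · calc C2 * ((C1 * ENNReal.ofReal C3) * H * ENNReal.ofReal (t ^ (-σ) * b t))
          = C2 * ((C1 * ENNReal.ofReal C3) * H *
              (ENNReal.ofReal (t ^ (-σ) * a t) * ENNReal.ofReal (d t))) := by
            rw [← ENNReal.ofReal_mul (by positivity)]
            congr 3; simp only [hddef]; field_simp
        _ ≤ C2 * ((C1 * ENNReal.ofReal C3) * H *
              (ENNReal.ofReal (t ^ (-σ) * a t) * (C4 * BB r d t))) := by
            gcongr; exact h4 t ht
        _ = (C2 * (C1 * ENNReal.ofReal C3) * C4) *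
              (H * (ENNReal.ofReal (t ^ (-σ) * a t) * BB r d t)) := by ring
        _ ≤ _ := by gcongr; exact le_add_self

theorem phi_lower {r q : ℝ≥0∞} (hr : 0 < r) (hq : 0 < q) {a b : ℝ → ℝ} (ha : SVl a) (hb : SVl b)
    (σ : ℝ) (hfin : BB r (fun s => b s / a s) 1 ≠ ∞) :
    ∃ C : ℝ≥0∞, C ≠ ∞ ∧ ∀ t, 0 < t → ∀ (h : ℝ → ℝ≥0∞), (∀ u, t ≤ u → h t ≤ h u) →
      ENNReal.ofReal (t ^ (-σ) * (a t * (BB r (fun s => b s / a s) t).toReal)) * h t ≤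
        C * phi σ r q b a h := by
  have hd := hb.div ha
  set d : ℝ → ℝ := fun s => b s / a s with hddef
  obtain ⟨C1, hC1, h1⟩ := ha.block (-σ) 2 two_pos
  refine ⟨ENNReal.ofReal C1 * 2 ^ q⁻¹.toReal, ENNReal.mul_ne_top (by simp)
    (ENNReal.rpow_ne_top_of_nonneg ENNReal.toReal_nonneg (by simp)), fun t ht h hm => ?_⟩
  have hat := ha.1 t ht
  have hBt := BB_fin hr hd hfin t
  have hcc : ENNReal.ofReal (t ^ (-σ) * (a t * (BB r d t).toReal)) =
      ENNReal.ofReal (t ^ (-σ) * a t) * BB r d t := by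
    rw [← mul_assoc, ENNReal.ofReal_mul (by positivity), ENNReal.ofReal_toReal hBt]
  rw [hcc]
  set I : ℝ → ℝ≥0∞ := fun s =>
    LqNorm q (Ioi s) (fun u => ENNReal.ofReal (u ^ (-σ - q⁻¹.toReal) * a u) * h u) with hI
  have hIt : ENNReal.ofReal (t ^ (-σ) * a t / C1) * h t ≤ 2 ^ q⁻¹.toReal * I t := by
    refine (block_lower hq (t := t) (s := 2 * t)
      (F := fun u => ENNReal.ofReal (u ^ (-σ - q⁻¹.toReal) * a u) * h u) ht le_rfl
      fun u hu => ?_).trans ?_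
    · have hu0 : 0 < u := ht.trans hu.1
      have e := h1 t u ht hu0 (RR_le ht hu0 (by linarith [hu.1]) (by linarith [hu.2]))
      rw [← mul_assoc, ← ENNReal.ofReal_mul (by positivity)]
      gcongr ENNReal.ofReal ?_ * ?_
      · have e1 : u ^ (-σ - q⁻¹.toReal) = u ^ (-(q⁻¹.toReal)) * u ^ (-σ) := by
          rw [← Real.rpow_add hu0]; ring_nf
        rw [e1, mul_assoc]
        gcongr
        rw [div_le_iff₀ hC1]; linarith
      · exact hm u hu.1.le
    · gcongr
      exact LqNorm_mono_set (fun u hu => hu.1) _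
  calc ENNReal.ofReal (t ^ (-σ) * a t) * BB r d t * h t
      = ENNReal.ofReal C1 * (ENNReal.ofReal (t ^ (-σ) * a t / C1) * h t) * BB r d t := by
        have : ENNReal.ofReal (t ^ (-σ) * a t) =
            ENNReal.ofReal C1 * ENNReal.ofReal (t ^ (-σ) * a t / C1) := by
          rw [← ENNReal.ofReal_mul hC1.le]; congr 1; field_simp
        rw [this]; ring
    _ ≤ ENNReal.ofReal C1 * (2 ^ q⁻¹.toReal * I t) * BB r d t := by gcongr
    _ = ENNReal.ofReal C1 * 2 ^ q⁻¹.toReal * (I t * BB r d t) := by ring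
    _ ≤ ENNReal.ofReal C1 * 2 ^ q⁻¹.toReal * phi σ r q b a h := by
        gcongr
        refine (le_LqNorm_const_mul hr _ _).trans ?_
        refine le_trans ?_ (LqNorm_mono_set (s := Ioo 0 t) (fun u hu => hu.1) _)
        refine LqNorm_mono measurableSet_Ioo fun s hs => ?_
        rw [mul_comm]
        unfold svWgt
        gcongr
        exact LqNorm_mono_set (Ioi_subset_Ioi hs.2.le) _

end sv

section K

theorem Kf_mono (N₀ N₁ : E → ℝ≥0∞) (f : E) {t u : ℝ} (h : t ≤ u) :
    Kf N₀ N₁ t f ≤ Kf N₀ N₁ u f := by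
  unfold Kf
  refine iInf_mono fun g => ?_
  gcongr

theorem Kf_ratio (N₀ N₁ : E → ℝ≥0∞) (f : E) {t u : ℝ} (ht : 0 < t) (h : t ≤ u) :
    Kf N₀ N₁ u f ≤ ENNReal.ofReal (u / t) * Kf N₀ N₁ t f := by
  have hu : 0 < u := ht.trans_le h
  unfold Kf
  rw [ENNReal.mul_iInf_of_ne (by simp; positivity) (by simp)]
  refine iInf_mono fun g => ?_
  rw [mul_add, ← mul_assoc, ← ENNReal.ofReal_mul (by positivity), div_mul_cancel₀ _ ht.ne']
  gcongr
  refine le_mul_of_one_le_left' ?_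
  rw [ENNReal.one_le_ofReal]
  exact (one_le_div ht).2 h

theorem QuasiBanach.neg (A : QuasiBanach E) (x : E) : A.N (-x) = A.N x := by
  have := A.smul (-1) x
  simpa using this

theorem Kf_sub (A₀ A₁ : QuasiBanach E) : ∃ C : ℝ≥0∞, 1 ≤ C ∧ C ≠ ∞ ∧ ∀ u (x y : E),
    Kf A₀.N A₁.N u (x - y) ≤ C * (Kf A₀.N A₁.N u x + Kf A₀.N A₁.N u y) := by
  obtain ⟨C0, h01, h0, hq0⟩ := A₀.quasi
  obtain ⟨C1, h11, h1, hq1⟩ := A₁.quasi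
  refine ⟨max C0 C1, le_max_of_le_left h01, max_ne_top h0 h1, fun u x y => ?_⟩
  have hC : max C0 C1 ≠ ∞ := max_ne_top h0 h1
  have hC0 : max C0 C1 ≠ 0 := (lt_of_lt_of_le one_pos (le_max_of_le_left h01)).ne'
  conv_rhs => unfold Kf
  simp_rw [ENNReal.iInf_add, ENNReal.add_iInf, ENNReal.mul_iInf_of_ne hC0 hC]
  refine le_iInf fun g => le_iInf fun g' => ?_
  refine (iInf_le _ (g - g')).trans ?_
  have e0 : A₀.N (g - g') ≤ max C0 C1 * (A₀.N g + A₀.N g') := by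
    have := hq0 g (-g')
    rw [← sub_eq_add_neg, A₀.neg] at this
    exact this.trans (by gcongr; exact le_max_left _ _)
  have e1 : A₁.N (x - y - (g - g')) ≤ max C0 C1 * (A₁.N (x - g) + A₁.N (y - g')) := by
    have := hq1 (x - g) (-(y - g'))
    rw [A₁.neg, show x - g + -(y - g') = x - y - (g - g') by abel] at this
    exact this.trans (by gcongr; exact le_max_right _ _)
  calc _ ≤ max C0 C1 * (A₀.N g + A₀.N g') +
        ENNReal.ofReal u * (max C0 C1 * (A₁.N (x - g) + A₁.N (y - g'))) := by gcongr
    _ = _ := by ring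

end K


section holm

theorem holm_upper (A₀ A₁ : QuasiBanach E) {θ₀ θ₁ α β : ℝ} (hθ₀ : 0 < θ₀) (hθ₁ : θ₁ < 1)
    (hα : θ₀ < α) (hα1 : α ≤ 1) (hβ0 : 0 ≤ β) (hβ : β < θ₁)
    {r₀ r₁ q₀ q₁ : ℝ≥0∞} (hr₀ : 0 < r₀) (hr₁ : 0 < r₁) (hq₀ : 0 < q₀) (hq₁ : 0 < q₁)
    {a₀ a₁ b₀ b₁ : ℝ → ℝ} (ha₀ : SVl a₀) (ha₁ : SVl a₁) (hb₀ : SVl b₀) (hb₁ : SVl b₁)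
    (hfin₀ : BB r₀ (fun s => b₀ s / a₀ s) 1 ≠ ∞) (hfin₁ : BB r₁ (fun s => b₁ s / a₁ s) 1 ≠ ∞) :
    ∃ C : ℝ≥0∞, C ≠ ∞ ∧ ∀ (f : E) (t : ℝ), 0 < t → ∀ H : ℝ≥0∞, 0 < H → H ≠ ∞ →
      (∀ u, 0 < u → u ≤ t → Kf A₀.N A₁.N u f ≤ H * ENNReal.ofReal ((u/t)^α)) →
      (∀ u, t ≤ u → Kf A₀.N A₁.N u f ≤ H * ENNReal.ofReal ((u/t)^β)) →
      ∀ p : ℝ, 0 < p → p * (t ^ (-θ₁) * (a₁ t * (BB r₁ (fun s => b₁ s / a₁ s) t).toReal)) =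
        t ^ (-θ₀) * (a₀ t * (BB r₀ (fun s => b₀ s / a₀ s) t).toReal) →
      Kf (normR A₀.N A₁.N θ₀ r₀ q₀ b₀ a₀) (normR A₀.N A₁.N θ₁ r₁ q₁ b₁ a₁) p f ≤
        C * (H * ENNReal.ofReal
          (t ^ (-θ₀) * (a₀ t * (BB r₀ (fun s => b₀ s / a₀ s) t).toReal))) := by
  obtain ⟨C0, hC0, h0⟩ := phi_upper hr₀ hq₀ ha₀ hb₀ hα hθ₀ hfin₀
  obtain ⟨C1, hC1, h1⟩ := phi_upper hr₁ hq₁ ha₁ hb₁ hθ₁ hβ hfin₁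
  obtain ⟨Q, hQ1, hQ, hsub⟩ := Kf_sub A₀ A₁
  refine ⟨(C0 + C1) * (3 * Q), by finiteness, fun f t ht H hH0 hH hl hu p hp hpe => ?_⟩
  have hlt : Kf A₀.N A₁.N t f < 2 * H := by
    refine (hl t ht le_rfl).trans_lt ?_
    rw [div_self ht.ne', Real.one_rpow, ENNReal.ofReal_one, mul_one, two_mul]
    exact ENNReal.lt_add_right hH hH0.ne'
  obtain ⟨g, hg⟩ := iInf_lt_iff.1 hlt
  have hg0 : ∀ u, Kf A₀.N A₁.N u g ≤ 2 * H := fun u => by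
    refine (iInf_le _ g).trans ?_
    rw [sub_self, A₁.zero, mul_zero, add_zero]
    exact le_self_add.trans hg.le
  have hg1 : ∀ u, 0 < u → Kf A₀.N A₁.N u (f - g) ≤ 2 * H * ENNReal.ofReal (u/t) := fun u hu => by
    refine (iInf_le _ 0).trans ?_
    rw [A₀.zero, zero_add, sub_zero]
    have e : ENNReal.ofReal u = ENNReal.ofReal (u/t) * ENNReal.ofReal t := by
      rw [← ENNReal.ofReal_mul (by positivity), div_mul_cancel₀ _ ht.ne']
    rw [e, mul_assoc, mul_comm]
    exact mul_le_mul' (le_add_self.trans hg.le) le_rfl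
  have hone : ∀ x : ℝ≥0∞, x ≤ Q * x := fun x => le_mul_of_one_le_left' hQ1
  -- estimates
  have k0l : ∀ u, 0 < u → u ≤ t →
      Kf A₀.N A₁.N u g ≤ (3 * Q * H) * ENNReal.ofReal ((u/t)^α) := fun u hu0 hut => by
    have hx : 0 < u / t := by positivity
    have hx1 : u / t ≤ 1 := (div_le_one ht).2 hut
    have e := hsub u f (f - g)
    rw [_root_.sub_sub_cancel] at e
    refine e.trans ?_
    have hxx : u / t ≤ (u/t)^α := by
      conv_lhs => rw [← Real.rpow_one (u/t)]
      exact Real.rpow_le_rpow_of_exponent_ge hx hx1 hα1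
    calc _ ≤ Q * (H * ENNReal.ofReal ((u/t)^α) + 2 * H * ENNReal.ofReal ((u/t)^α)) := by
          gcongr Q * (?_ + ?_)
          · exact hl u hu0 hut
          · refine (hg1 u hu0).trans ?_
            gcongr
      _ = _ := by ring
  have k0u : ∀ u, t ≤ u →
      Kf A₀.N A₁.N u g ≤ (3 * Q * H) * ENNReal.ofReal ((u/t)^(0:ℝ)) := fun u hut => by
    rw [Real.rpow_zero, ENNReal.ofReal_one, mul_one]
    refine (hg0 u).trans ?_
    calc 2 * H ≤ Q * (2 * H) := hone _
      _ ≤ Q * (3 * H) := by gcongr; norm_num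
      _ = _ := by ring
  have k1l : ∀ u, 0 < u → u ≤ t →
      Kf A₀.N A₁.N u (f - g) ≤ (3 * Q * H) * ENNReal.ofReal ((u/t)^(1:ℝ)) := fun u hu0 hut => by
    rw [Real.rpow_one]
    refine (hg1 u hu0).trans ?_
    refine mul_le_mul' ?_ le_rfl
    calc 2 * H ≤ Q * (2 * H) := hone _
      _ ≤ Q * (3 * H) := by gcongr; norm_num
      _ = _ := by ring
  have k1u : ∀ u, t ≤ u →
      Kf A₀.N A₁.N u (f - g) ≤ (3 * Q * H) * ENNReal.ofReal ((u/t)^β) := fun u hut => by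
    have hu0 : 0 < u := ht.trans_le hut
    have hx1 : 1 ≤ u / t := (one_le_div ht).2 hut
    refine (hsub u f g).trans ?_
    have hxx : 1 ≤ ENNReal.ofReal ((u/t)^β) := by
      rw [ENNReal.one_le_ofReal]; exact Real.one_le_rpow hx1 hβ0
    calc _ ≤ Q * (H * ENNReal.ofReal ((u/t)^β) + 2 * H * ENNReal.ofReal ((u/t)^β)) := by
          gcongr Q * (?_ + ?_)
          · exact hu u hut
          · exact (hg0 u).trans (le_mul_of_one_le_right' hxx)
      _ = _ := by ring
  have hH3 : 3 * Q * H ≠ ∞ := by finiteness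
  have n0 := h0 t ht (fun u => Kf A₀.N A₁.N u g) _ hH3 k0l k0u
  have n1 := h1 t ht (fun u => Kf A₀.N A₁.N u (f - g)) _ hH3 k1l k1u
  refine (iInf_le _ g).trans ?_
  calc _ ≤ C0 * (3 * Q * H * ENNReal.ofReal
          (t ^ (-θ₀) * (a₀ t * (BB r₀ (fun s => b₀ s / a₀ s) t).toReal))) +
        ENNReal.ofReal p * (C1 * (3 * Q * H * ENNReal.ofReal
          (t ^ (-θ₁) * (a₁ t * (BB r₁ (fun s => b₁ s / a₁ s) t).toReal)))) := by
        refine add_le_add n0 ?_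
        exact mul_le_mul' le_rfl n1
    _ = _ := by
        rw [← hpe, ENNReal.ofReal_mul hp.le]; ring

theorem holm_lower (A₀ A₁ : QuasiBanach E) {θ₀ θ₁ : ℝ}
    {r₀ r₁ q₀ q₁ : ℝ≥0∞} (hr₀ : 0 < r₀) (hr₁ : 0 < r₁) (hq₀ : 0 < q₀) (hq₁ : 0 < q₁)
    {a₀ a₁ b₀ b₁ : ℝ → ℝ} (ha₀ : SVl a₀) (ha₁ : SVl a₁) (hb₀ : SVl b₀) (hb₁ : SVl b₁)
    (hfin₀ : BB r₀ (fun s => b₀ s / a₀ s) 1 ≠ ∞) (hfin₁ : BB r₁ (fun s => b₁ s / a₁ s) 1 ≠ ∞) :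
    ∃ C : ℝ≥0∞, C ≠ ∞ ∧ ∀ (f : E) (t : ℝ), 0 < t →
      ∀ p : ℝ, 0 < p → p * (t ^ (-θ₁) * (a₁ t * (BB r₁ (fun s => b₁ s / a₁ s) t).toReal)) =
        t ^ (-θ₀) * (a₀ t * (BB r₀ (fun s => b₀ s / a₀ s) t).toReal) →
      ENNReal.ofReal (t ^ (-θ₀) * (a₀ t * (BB r₀ (fun s => b₀ s / a₀ s) t).toReal)) *
        Kf A₀.N A₁.N t f ≤
      C * Kf (normR A₀.N A₁.N θ₀ r₀ q₀ b₀ a₀) (normR A₀.N A₁.N θ₁ r₁ q₁ b₁ a₁) p f := by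
  obtain ⟨C0, hC0, h0⟩ := phi_lower hr₀ hq₀ ha₀ hb₀ θ₀ hfin₀
  obtain ⟨C1, hC1, h1⟩ := phi_lower hr₁ hq₁ ha₁ hb₁ θ₁ hfin₁
  obtain ⟨Q, hQ1, hQ, hsub⟩ := Kf_sub A₀ A₁
  have hneg : ∀ u (x : E), Kf A₀.N A₁.N u (0 - x) ≤ Q * Kf A₀.N A₁.N u x := fun u x => by
    refine (hsub u 0 x).trans ?_
    have : Kf A₀.N A₁.N u (0:E) = 0 := by
      refine le_antisymm ((iInf_le _ 0).trans ?_) bot_le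
      simp [A₀.zero, A₁.zero]
    rw [this, zero_add]
  have hC : Q * C0 + Q * Q * C1 + 1 ≠ ∞ := by finiteness
  refine ⟨Q * C0 + Q * Q * C1 + 1, hC, fun f t ht p hp hpe => ?_⟩
  conv_rhs => unfold Kf
  rw [ENNReal.mul_iInf_of_ne (by simp) hC]
  refine le_iInf fun g => ?_
  have n0 := h0 t ht (fun u => Kf A₀.N A₁.N u g) (fun u hu => Kf_mono _ _ _ hu)
  have n1 := h1 t ht (fun u => Kf A₀.N A₁.N u (f - g)) (fun u hu => Kf_mono _ _ _ hu)
  change _ ≤ C0 * normR A₀.N A₁.N θ₀ r₀ q₀ b₀ a₀ g at n0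
  change _ ≤ C1 * normR A₀.N A₁.N θ₁ r₁ q₁ b₁ a₁ (f - g) at n1
  have hs := hsub t g (0 - (f - g))
  rw [show g - (0 - (f - g)) = f by abel] at hs
  set w := ENNReal.ofReal (t ^ (-θ₀) * (a₀ t * (BB r₀ (fun s => b₀ s / a₀ s) t).toReal)) with hw
  set w1 := ENNReal.ofReal (t ^ (-θ₁) * (a₁ t * (BB r₁ (fun s => b₁ s / a₁ s) t).toReal)) with hw1
  have hww : w = ENNReal.ofReal p * w1 := by
    rw [hw, ← hpe, ENNReal.ofReal_mul hp.le]
  calc w * Kf A₀.N A₁.N t f ≤ w * (Q * (Kf A₀.N A₁.N t g + Q * Kf A₀.N A₁.N t (f - g))) := by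
        refine mul_le_mul' le_rfl (hs.trans ?_)
        gcongr
        exact hneg _ _
    _ = Q * (w * Kf A₀.N A₁.N t g) + Q * Q * (ENNReal.ofReal p * (w1 * Kf A₀.N A₁.N t (f - g))) := by
        conv_rhs => rw [← mul_assoc (ENNReal.ofReal p), ← hww]
        ring
    _ ≤ Q * (C0 * normR A₀.N A₁.N θ₀ r₀ q₀ b₀ a₀ g) + Q * Q * (ENNReal.ofReal p *
          (C1 * normR A₀.N A₁.N θ₁ r₁ q₁ b₁ a₁ (f - g))) := by
        refine add_le_add (mul_le_mul' le_rfl n0) (mul_le_mul' le_rfl (mul_le_mul' le_rfl n1))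
    _ = (Q * C0) * normR A₀.N A₁.N θ₀ r₀ q₀ b₀ a₀ g +
          (Q * Q * C1) * (ENNReal.ofReal p * normR A₀.N A₁.N θ₁ r₁ q₁ b₁ a₁ (f - g)) := by ring
    _ ≤ (Q * C0 + Q * Q * C1 + 1) * normR A₀.N A₁.N θ₀ r₀ q₀ b₀ a₀ g +
          (Q * C0 + Q * Q * C1 + 1) *
            (ENNReal.ofReal p * normR A₀.N A₁.N θ₁ r₁ q₁ b₁ a₁ (f - g)) := by
        refine add_le_add (mul_le_mul' ?_ le_rfl) (mul_le_mul' ?_ le_rfl)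
        · rw [add_assoc]; exact le_self_add
        · exact le_add_self.trans le_self_add
    _ = _ := by ring

end holm

section disc

theorem Lac.M_pos {M : ℝ} {ρ : ℤ → ℝ} (h : Lac M ρ) : 0 < M := by
  have h1 := h.lo 0
  have h2 := h.hi 0
  have h3 := h.pos 0
  by_contra hM
  nlinarith

theorem disc_upper {r : ℝ≥0∞} (hr : 0 < r) {S : ℝ → ℝ} (hS : SVl S) (η : ℝ) {M : ℝ}
    {ρ : ℤ → ℝ} (hρ : Lac M ρ) :
    ∃ C : ℝ≥0∞, C ≠ ∞ ∧ ∀ (N₀ N₁ : E → ℝ≥0∞) (f : E),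
      normK N₀ N₁ η r S f ≤
        C * lr r (fun k => ENNReal.ofReal (ρ k ^ (-η) * S (ρ k)) * Kf N₀ N₁ (ρ k) f) := by
  have hM := hρ.M_pos
  obtain ⟨C1, hC1, h1⟩ := hS.block (-η) (max M 1) (by positivity)
  obtain ⟨C2, hC2, h2⟩ := D_upper hr M
  refine ⟨C2 * ENNReal.ofReal (C1 * M), by finiteness, fun N₀ N₁ f => ?_⟩
  rw [mul_assoc, ← lr_const_mul hr]
  refine h2 ρ hρ _ _ fun k u hu => ?_
  have hk := hρ.pos k
  have hu0 : 0 < u := hk.trans_le hu.1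
  have hu2 : u ≤ M * ρ k := hu.2.le.trans (hρ.hi k)
  have e := h1 u (ρ k) hu0 hk (RR_le hu0 hk
    (hu2.trans (mul_le_mul_of_nonneg_right (le_max_left _ _) hk.le))
    (hu.1.trans (le_mul_of_one_le_left hu0.le (le_max_right _ _))))
  have hSu := hS.1 u hu0
  have hSk := hS.1 _ hk
  have e1 : u ^ (-η - r⁻¹.toReal) = u ^ (-(r⁻¹.toReal)) * u ^ (-η) := by
    rw [← Real.rpow_add hu0]; ring_nf
  have e2 : Kf N₀ N₁ u f ≤ ENNReal.ofReal M * Kf N₀ N₁ (ρ k) f := by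
    refine (Kf_ratio N₀ N₁ f hk hu.1).trans (mul_le_mul' (ENNReal.ofReal_le_ofReal ?_) le_rfl)
    rwa [div_le_iff₀ hk]
  calc ENNReal.ofReal (u ^ (-η - r⁻¹.toReal) * S u) * Kf N₀ N₁ u f
      ≤ ENNReal.ofReal (u ^ (-(r⁻¹.toReal)) * (C1 * (ρ k ^ (-η) * S (ρ k)))) *
          (ENNReal.ofReal M * Kf N₀ N₁ (ρ k) f) := by
        refine mul_le_mul' (ENNReal.ofReal_le_ofReal ?_) e2
        rw [e1, mul_assoc]
        exact mul_le_mul_of_nonneg_left e (by positivity)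
    _ = _ := by
        rw [ENNReal.ofReal_mul (p := u ^ (-(r⁻¹.toReal))) (by positivity),
          ENNReal.ofReal_mul (p := C1) hC1.le, ENNReal.ofReal_mul (p := C1) hC1.le]
        ring

theorem disc_lower {r : ℝ≥0∞} (hr : 0 < r) {S : ℝ → ℝ} (hS : SVl S) (η : ℝ) {M : ℝ}
    {ρ : ℤ → ℝ} (hρ : Lac M ρ) :
    ∃ C : ℝ≥0∞, C ≠ ∞ ∧ ∀ (N₀ N₁ : E → ℝ≥0∞) (f : E),
      lr r (fun k => ENNReal.ofReal (ρ k ^ (-η) * S (ρ k)) * Kf N₀ N₁ (ρ k) f) ≤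
        C * normK N₀ N₁ η r S f := by
  have hM := hρ.M_pos
  obtain ⟨C1, hC1, h1⟩ := hS.block (-η) (max M 1) (by positivity)
  refine ⟨ENNReal.ofReal C1 * 2 ^ r⁻¹.toReal, ENNReal.mul_ne_top (by simp)
    (ENNReal.rpow_ne_top_of_nonneg ENNReal.toReal_nonneg (by simp)), fun N₀ N₁ f => ?_⟩
  have key : (fun k => ENNReal.ofReal (ρ k ^ (-η) * S (ρ k)) * Kf N₀ N₁ (ρ k) f) =
      fun k => ENNReal.ofReal C1 *
        (ENNReal.ofReal (ρ k ^ (-η) * S (ρ k) / C1) * Kf N₀ N₁ (ρ k) f) := by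
    funext k
    rw [← mul_assoc, ← ENNReal.ofReal_mul hC1.le]
    congr 2; field_simp
  rw [key, lr_const_mul hr, mul_assoc]
  refine mul_le_mul' le_rfl ?_
  refine D_lower hr hρ _ _ fun k u hu => ?_
  have hk := hρ.pos k
  have hu0 : 0 < u := hk.trans hu.1
  have hu2 : u ≤ M * ρ k := hu.2.le.trans (hρ.hi k)
  have e := h1 (ρ k) u hk hu0 (RR_le hk hu0
    (hu.1.le.trans (le_mul_of_one_le_left hu0.le (le_max_right _ _)))
    (hu2.trans (mul_le_mul_of_nonneg_right (le_max_left _ _) hk.le)))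
  have e1 : u ^ (-η - r⁻¹.toReal) = u ^ (-(r⁻¹.toReal)) * u ^ (-η) := by
    rw [← Real.rpow_add hu0]; ring_nf
  rw [← mul_assoc, ← ENNReal.ofReal_mul (by positivity), e1, mul_assoc (u ^ (-(r⁻¹.toReal)))]
  refine mul_le_mul' (ENNReal.ofReal_le_ofReal (mul_le_mul_of_nonneg_left ?_ (by positivity)))
    (Kf_mono _ _ _ hu.1.le)
  rw [div_le_iff₀ hC1]; linarith

theorem exists_lambda {S : ℝ → ℝ} (hS : SVl S) {δ : ℝ} (hδ : 0 < δ) :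
    ∃ l : ℝ, 2 ≤ l ∧ Lac l (fun k : ℤ => l ^ k) ∧
      ∃ M, Lac M (fun k : ℤ => (l ^ k) ^ δ * S (l ^ k)) := by
  obtain ⟨C, hC, h⟩ := hS.2 (δ/2) (half_pos hδ)
  set l := max 2 ((2*C) ^ (2/δ)) with hl
  have hl2 : 2 ≤ l := le_max_left _ _
  have hl0 : 0 < l := by linarith
  have hlC : 2 * C ≤ l ^ (δ/2) := by
    calc 2 * C = ((2*C) ^ (2/δ)) ^ (δ/2) := by
          rw [← Real.rpow_mul (by positivity)]
          have : 2 / δ * (δ/2) = 1 := by field_simp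
          rw [this, Real.rpow_one]
      _ ≤ _ := by gcongr; exact le_max_right _ _
  have hp : ∀ k : ℤ, 0 < l ^ k := fun k => by positivity
  have hs : ∀ k : ℤ, l ^ (k+1) = l * l ^ k := fun k => by
    rw [zpow_add_one₀ hl0.ne', mul_comm]
  have hRR : ∀ k : ℤ, RR (l ^ k) (l ^ (k+1)) = l := fun k => by
    rw [RR_of_le (hp k) (by rw [hs]; nlinarith [hp k]), hs]
    have := hp k
    field_simp
  have hdd : l ^ (δ/2) * l ^ (δ/2) = l ^ δ := by rw [← Real.rpow_add hl0]; ring_nf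
  refine ⟨l, hl2, ⟨hp, fun k => ?_, fun k => (hs k).le⟩, l ^ δ * (C * l ^ (δ/2)),
    fun k => ?_, fun k => ?_, fun k => ?_⟩
  · rw [hs]; exact mul_le_mul_of_nonneg_right hl2 (hp k).le
  · have := hS.1 _ (hp k); have := hp k; positivity
  · have h1 := h (l ^ k) (l ^ (k+1)) (hp _) (hp _)
    rw [hRR] at h1
    have hk := hp k
    have h0 := hS.1 _ (hp (k+1))
    have e : (l ^ (k+1)) ^ δ = l ^ δ * (l ^ k) ^ δ := by
      rw [hs, Real.mul_rpow hl0.le hk.le]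
    calc 2 * ((l ^ k) ^ δ * S (l ^ k))
        ≤ 2 * ((l ^ k) ^ δ * (C * l ^ (δ/2) * S (l ^ (k+1)))) := by gcongr
      _ = (2 * C) * (l ^ (δ/2) * (l ^ k) ^ δ * S (l ^ (k+1))) := by ring
      _ ≤ l ^ (δ/2) * (l ^ (δ/2) * (l ^ k) ^ δ * S (l ^ (k+1))) := by gcongr
      _ = _ := by rw [e, ← hdd]; ring
  · have h1 := h (l ^ (k+1)) (l ^ k) (hp _) (hp _)
    rw [RR_comm, hRR] at h1
    have hk := hp k
    have e : (l ^ (k+1)) ^ δ = l ^ δ * (l ^ k) ^ δ := by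
      rw [hs, Real.mul_rpow hl0.le hk.le]
    calc (l ^ (k+1)) ^ δ * S (l ^ (k+1)) ≤ (l ^ (k+1)) ^ δ * (C * l ^ (δ/2) * S (l ^ k)) := by
          gcongr
      _ = _ := by rw [e]; ring

theorem RR_tri {s t u : ℝ} (hs : 0 < s) (ht : 0 < t) (hu : 0 < u) :
    RR s t ≤ RR s u * RR u t := by
  have h1 := one_le_RR hs hu
  have h2 := one_le_RR hu ht
  refine max_le ?_ ?_
  · calc s / t = (s/u) * (u/t) := by field_simp
      _ ≤ _ := mul_le_mul (le_max_left _ _) (le_max_left _ _) (by positivity) (zero_le_one.trans h1)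
  · calc t / s = (u/s) * (t/u) := by field_simp
      _ ≤ _ := mul_le_mul (le_max_right _ _) (le_max_right _ _) (by positivity) (zero_le_one.trans h1)

theorem RR_zpow {l : ℝ} (hl : 1 ≤ l) (j k : ℤ) : RR (l ^ j) (l ^ k) = l ^ (k - j).natAbs := by
  have hl0 : 0 < l := by linarith
  rcases le_total j k with h | h
  · rw [RR_of_le (by positivity) (zpow_le_zpow_right₀ hl h), ← zpow_sub₀ hl0.ne', ← zpow_natCast]
    congr 1; omega
  · rw [RR_of_ge (by positivity) (zpow_le_zpow_right₀ hl h), ← zpow_sub₀ hl0.ne', ← zpow_natCast]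
    congr 1; omega

theorem core_bound {S : ℝ → ℝ} (hS : SVl S) {η κ l : ℝ} (hη : 0 < η) (hκ : 0 < κ) (hl : 2 ≤ l)
    (hL : Lac l (fun k : ℤ => l ^ k)) :
    ∃ C : ℝ≥0∞, C ≠ ∞ ∧ ∀ (N₀ N₁ : E → ℝ≥0∞) (f : E) (k : ℤ) (u : ℝ), 0 < u →
      Kf N₀ N₁ u f ≤ C * ((⨆ j : ℤ, ENNReal.ofReal (l ^ (-κ)) ^ (k - j).natAbs *
        (ENNReal.ofReal ((l ^ j) ^ (-η) * S (l ^ j)) * Kf N₀ N₁ (l ^ j) f)) *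
        ENNReal.ofReal (((l ^ k) ^ (-η) * S (l ^ k))⁻¹ *
          ((u / l ^ k) ^ η * RR u (l ^ k) ^ (2*κ)))) := by
  obtain ⟨C1, hC1, h1⟩ := hS.2 κ hκ
  have hl0 : 0 < l := by linarith
  refine ⟨ENNReal.ofReal (l * C1 * l ^ (2*κ)), by finiteness, fun N₀ N₁ f k u hu => ?_⟩
  obtain ⟨j, hj1, hj2⟩ := hL.exists_mem hu
  have hj0 : 0 < l ^ j := by positivity
  have hk0 : 0 < l ^ k := by positivity
  have hSj := hS.1 _ hj0
  have hSk := hS.1 _ hk0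
  rw [zpow_add_one₀ hl0.ne'] at hj2
  set n := (k - j).natAbs with hn
  have hRn : RR (l ^ j) (l ^ k) = l ^ n := RR_zpow (by linarith) j k
  have hR := RR_pos hj0 hk0
  have hRu := RR_pos hu hk0
  set R := RR (l ^ j) (l ^ k) with hRdef
  have e0 : Kf N₀ N₁ u f ≤ ENNReal.ofReal l * Kf N₀ N₁ (l ^ j) f := by
    refine (Kf_ratio N₀ N₁ f hj0 hj1).trans (mul_le_mul' (ENNReal.ofReal_le_ofReal ?_) le_rfl)
    rw [div_le_iff₀ hj0]; linarith
  have hRle : R ≤ l * RR u (l ^ k) := by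
    refine (RR_tri hj0 hk0 hu).trans (mul_le_mul_of_nonneg_right ?_ hRu.le)
    exact RR_le hj0 hu (by nlinarith) (by linarith)
  have hg : ENNReal.ofReal (l ^ (-κ)) ^ n = ENNReal.ofReal (R ^ (-κ)) := by
    rw [← ENNReal.ofReal_pow (by positivity), hRn, ← Real.rpow_natCast, ← Real.rpow_natCast,
      ← Real.rpow_mul hl0.le, ← Real.rpow_mul hl0.le, mul_comm]
  have hx : ENNReal.ofReal (R ^ (-κ)) * (ENNReal.ofReal ((l ^ j) ^ (-η) * S (l ^ j)) *
      Kf N₀ N₁ (l ^ j) f) ≤ ⨆ j : ℤ, ENNReal.ofReal (l ^ (-κ)) ^ (k - j).natAbs *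
        (ENNReal.ofReal ((l ^ j) ^ (-η) * S (l ^ j)) * Kf N₀ N₁ (l ^ j) f) := by
    rw [← hg]
    exact le_iSup (fun j : ℤ => ENNReal.ofReal (l ^ (-κ)) ^ (k - j).natAbs *
        (ENNReal.ofReal ((l ^ j) ^ (-η) * S (l ^ j)) * Kf N₀ N₁ (l ^ j) f)) j
  have hreal : l * (R ^ κ * ((l ^ j) ^ η * (S (l ^ j))⁻¹)) ≤ (l * C1 * l ^ (2*κ)) *
      (((l ^ k) ^ (-η) * S (l ^ k))⁻¹ * ((u / l ^ k) ^ η * RR u (l ^ k) ^ (2*κ))) := by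
    have hh := h1 (l ^ k) (l ^ j) hk0 hj0
    rw [RR_comm] at hh
    have i1 : (S (l ^ j))⁻¹ ≤ C1 * R ^ κ * (S (l ^ k))⁻¹ := by
      rw [inv_le_comm₀ hSj (by positivity), mul_inv, inv_inv, inv_mul_le_iff₀ (by positivity)]
      exact hh
    have i2 : (l ^ j) ^ η ≤ u ^ η := Real.rpow_le_rpow hj0.le hj1 hη.le
    have i3 : R ^ (2*κ) ≤ l ^ (2*κ) * RR u (l ^ k) ^ (2*κ) := by
      rw [← Real.mul_rpow hl0.le hRu.le]
      exact Real.rpow_le_rpow hR.le hRle (by positivity)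
    calc l * (R ^ κ * ((l ^ j) ^ η * (S (l ^ j))⁻¹))
        ≤ l * (R ^ κ * (u ^ η * (C1 * R ^ κ * (S (l ^ k))⁻¹))) := by
          gcongr
      _ = l * C1 * u ^ η * (S (l ^ k))⁻¹ * R ^ (2*κ) := by
          rw [show 2 * κ = κ + κ by ring, Real.rpow_add hR]; ring
      _ ≤ l * C1 * u ^ η * (S (l ^ k))⁻¹ * (l ^ (2*κ) * RR u (l ^ k) ^ (2*κ)) := by
          exact mul_le_mul_of_nonneg_left i3 (by positivity)
      _ = _ := by
          rw [Real.div_rpow hu.le hk0.le, Real.rpow_neg hk0.le]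
          have : 0 < (l ^ k) ^ η := by positivity
          field_simp
  calc Kf N₀ N₁ u f ≤ ENNReal.ofReal l * Kf N₀ N₁ (l ^ j) f := e0
    _ = ENNReal.ofReal (l * (R ^ κ * ((l ^ j) ^ η * (S (l ^ j))⁻¹))) *
        (ENNReal.ofReal (R ^ (-κ)) * (ENNReal.ofReal ((l ^ j) ^ (-η) * S (l ^ j)) *
          Kf N₀ N₁ (l ^ j) f)) := by
        rw [← mul_assoc (ENNReal.ofReal (R ^ (-κ))), ← ENNReal.ofReal_mul (by positivity),
          ← mul_assoc, ← ENNReal.ofReal_mul (by positivity)]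
        congr 2
        rw [Real.rpow_neg hR.le, Real.rpow_neg hj0.le]
        have : 0 < (l ^ j) ^ η := by positivity
        field_simp
    _ ≤ ENNReal.ofReal ((l * C1 * l ^ (2*κ)) *
          (((l ^ k) ^ (-η) * S (l ^ k))⁻¹ * ((u / l ^ k) ^ η * RR u (l ^ k) ^ (2*κ)))) *
        (⨆ j : ℤ, ENNReal.ofReal (l ^ (-κ)) ^ (k - j).natAbs *
          (ENNReal.ofReal ((l ^ j) ^ (-η) * S (l ^ j)) * Kf N₀ N₁ (l ^ j) f)) :=
        mul_le_mul' (ENNReal.ofReal_le_ofReal hreal) hx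
    _ = _ := by
        rw [ENNReal.ofReal_mul (p := l * C1 * l ^ (2*κ)) (by positivity)]; ring

end disc
theorem theorem27
    (A₀ A₁ : QuasiBanach E)
    (hne : ∃ x : E, x ≠ 0 ∧ A₀.N x ≠ ∞ ∧ A₁.N x ≠ ∞)
    (θ₀ θ₁ θ : ℝ) (hθ₀ : 0 < θ₀) (hθ₀₁ : θ₀ < θ₁) (hθ₁ : θ₁ < 1) (hθ : 0 < θ) (hθ' : θ < 1)
    (r r₀ r₁ q₀ q₁ : ℝ≥0∞) (hr : 0 < r) (hr₀ : 0 < r₀) (hr₁ : 0 < r₁) (hq₀ : 0 < q₀) (hq₁ : 0 < q₁)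
    (a a₀ a₁ b₀ b₁ : ℝ → ℝ)
    (h_sv_a : SlowlyVarying a)
    (h_sv_a₀ : SlowlyVarying a₀)
    (h_sv_a₁ : SlowlyVarying a₁)
    (h_sv_b₀ : SlowlyVarying b₀)
    (h_sv_b₁ : SlowlyVarying b₁)
    (hfin₀ : LqNorm r₀ (Ioo 0 1) (svWgt r₀ (fun s => b₀ s / a₀ s)) ≠ ∞)
    (hfin₁ : LqNorm r₁ (Ioo 0 1) (svWgt r₁ (fun s => b₁ s / a₁ s)) ≠ ∞)
    (c₀ c₁ ρ : ℝ → ℝ)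
    (hc₀ : ∀ t, c₀ t = a₀ t * (LqNorm r₀ (Ioo 0 t) (svWgt r₀ (fun s => b₀ s / a₀ s))).toReal)
    (hc₁ : ∀ t, c₁ t = a₁ t * (LqNorm r₁ (Ioo 0 t) (svWgt r₁ (fun s => b₁ s / a₁ s))).toReal)
    (hρ : ∀ t, ρ t = t ^ (θ₁ - θ₀) * (c₀ t / c₁ t)) :
    EquivNorms
      (normK (normR A₀.N A₁.N θ₀ r₀ q₀ b₀ a₀) (normR A₀.N A₁.N θ₁ r₁ q₁ b₁ a₁) θ r a)
      (normK A₀.N A₁.N ((1 - θ) * θ₀ + θ * θ₁) r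
        (fun t => c₀ t ^ (1 - θ) * c₁ t ^ θ * a (ρ t))) := by
  have ha := h_sv_a.svl
  have ha₀ := h_sv_a₀.svl
  have ha₁ := h_sv_a₁.svl
  have hb₀ := h_sv_b₀.svl
  have hb₁ := h_sv_b₁.svl
  change BB r₀ (fun s => b₀ s / a₀ s) 1 ≠ ∞ at hfin₀
  change BB r₁ (fun s => b₁ s / a₁ s) 1 ≠ ∞ at hfin₁
  change ∀ t, c₀ t = a₀ t * (BB r₀ (fun s => b₀ s / a₀ s) t).toReal at hc₀
  change ∀ t, c₁ t = a₁ t * (BB r₁ (fun s => b₁ s / a₁ s) t).toReal at hc₁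
  have hcs₀ : SVl c₀ := by
    rw [funext hc₀]; exact ha₀.mul (BB_svl hr₀ (hb₀.div ha₀) hfin₀)
  have hcs₁ : SVl c₁ := by
    rw [funext hc₁]; exact ha₁.mul (BB_svl hr₁ (hb₁.div ha₁) hfin₁)
  have hS : SVl (fun t => c₀ t / c₁ t) := hcs₀.div hcs₁
  have hδ : 0 < θ₁ - θ₀ := by linarith
  have hρ' : ρ = fun t => t ^ (θ₁ - θ₀) * (c₀ t / c₁ t) := funext hρ
  have hρ0 : ∀ t, 0 < t → 0 < ρ t := fun t ht => by
    have := hcs₀.1 t ht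
    have := hcs₁.1 t ht
    rw [hρ]; positivity
  set η := (1 - θ) * θ₀ + θ * θ₁ with hη
  set a' : ℝ → ℝ := fun t => c₀ t ^ (1 - θ) * c₁ t ^ θ * a (ρ t) with ha'
  have hsa : SVl a' := by
    refine ((hcs₀.rpow (by linarith)).mul (hcs₁.rpow hθ)).mul ?_
    rw [hρ']; exact ha.comp hS hδ
  have hη0 : θ₀ < η := by rw [hη]; nlinarith
  have hη1 : η < θ₁ := by rw [hη]; nlinarith
  obtain ⟨κ, hκ, hκ0, hκ1⟩ : ∃ κ : ℝ, 0 < κ ∧ θ₀ < η - 2 * κ ∧ η + 2 * κ < θ₁ := by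
    refine ⟨min (η - θ₀) (θ₁ - η) / 3, ?_, ?_, ?_⟩
    · have : 0 < min (η - θ₀) (θ₁ - η) := lt_min (by linarith) (by linarith)
      positivity
    · linarith [min_le_left (η - θ₀) (θ₁ - η)]
    · linarith [min_le_right (η - θ₀) (θ₁ - η)]
  obtain ⟨l, hl, hL, M, hLρ⟩ := exists_lambda hS hδ
  have hl0 : 0 < l := by linarith
  have hLρ : Lac M (fun k : ℤ => ρ (l ^ k)) := by rw [hρ']; exact hLρ
  have hw : ∀ t, 0 < t → ρ t * (t ^ (-θ₁) * (a₁ t * (BB r₁ (fun s => b₁ s / a₁ s) t).toReal)) =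
      t ^ (-θ₀) * (a₀ t * (BB r₀ (fun s => b₀ s / a₀ s) t).toReal) := fun t ht => by
    rw [← hc₀, ← hc₁, hρ]
    have h1 := hcs₁.1 t ht
    have e : t ^ (-θ₀) = t ^ (θ₁ - θ₀) * t ^ (-θ₁) := by
      rw [← Real.rpow_add ht]; congr 1; ring
    rw [e]; field_simp
  have hW : ∀ t, 0 < t → t ^ (-η) * a' t = (ρ t ^ (-θ) * a (ρ t)) * (t ^ (-θ₀) * c₀ t) :=
    fun t ht => by
    have h0 := hcs₀.1 t ht
    have h1 := hcs₁.1 t ht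
    have e : ρ t ^ (-θ) = t ^ (-(θ₁ - θ₀) * θ) * (c₀ t ^ (-θ) * c₁ t ^ θ) := by
      rw [hρ, Real.mul_rpow (by positivity) (by positivity), Real.div_rpow h0.le h1.le,
        ← Real.rpow_mul ht.le, Real.rpow_neg h1.le, div_inv_eq_mul]
      congr 2; ring
    have e2 : t ^ (-η) = t ^ (-(θ₁ - θ₀) * θ) * t ^ (-θ₀) := by
      rw [← Real.rpow_add ht]; congr 1; rw [hη]; ring
    have e3 : c₀ t ^ (1 - θ) = c₀ t ^ (-θ) * c₀ t := by
      rw [sub_eq_neg_add, Real.rpow_add h0, Real.rpow_one]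
    simp only [ha']
    rw [e, e2, e3]; ring
  obtain ⟨D1, hD1, hd1⟩ := disc_upper (E := E) hr ha θ hLρ
  obtain ⟨D2, hD2, hd2⟩ := disc_lower (E := E) hr ha θ hLρ
  obtain ⟨D3, hD3, hd3⟩ := disc_upper (E := E) hr hsa η hL
  obtain ⟨D4, hD4, hd4⟩ := disc_lower (E := E) hr hsa η hL
  obtain ⟨C1, hC1, h1⟩ := holm_upper A₀ A₁ hθ₀ hθ₁ hκ0 (by linarith)
    (by linarith : 0 ≤ η + 2 * κ) hκ1 hr₀ hr₁ hq₀ hq₁ ha₀ ha₁ hb₀ hb₁ hfin₀ hfin₁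
  obtain ⟨C2, hC2, h2⟩ := holm_lower A₀ A₁ (θ₀ := θ₀) (θ₁ := θ₁)
    hr₀ hr₁ hq₀ hq₁ ha₀ ha₁ hb₀ hb₁ hfin₀ hfin₁
  obtain ⟨C3, hC3, h3⟩ := core_bound (E := E) hsa (by linarith : 0 < η) hκ hl hL
  have hg1 : ENNReal.ofReal (l ^ (-κ)) < 1 := by
    rw [ENNReal.ofReal_lt_one]
    exact Real.rpow_lt_one_of_one_lt_of_neg (by linarith) (by linarith)
  obtain ⟨C4, hC4, h4⟩ := Y_sup hr hg1
  set X₀ := normR A₀.N A₁.N θ₀ r₀ q₀ b₀ a₀ with hX₀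
  set X₁ := normR A₀.N A₁.N θ₁ r₁ q₁ b₁ a₁ with hX₁
  -- pointwise upper estimate
  have hup : ∀ (f : E) (k : ℤ),
      ENNReal.ofReal (ρ (l ^ k) ^ (-θ) * a (ρ (l ^ k))) * Kf X₀ X₁ (ρ (l ^ k)) f ≤
      ((C1 + 1) * (C3 + 1)) * ⨆ j : ℤ, ENNReal.ofReal (l ^ (-κ)) ^ (k - j).natAbs *
        (ENNReal.ofReal ((l ^ j) ^ (-η) * a' (l ^ j)) * Kf A₀.N A₁.N (l ^ j) f) := by
    intro f k
    have hk : 0 < l ^ k := by positivity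
    have hρk := hρ0 _ hk
    have hak := ha.1 _ hρk
    have hck := hcs₀.1 _ hk
    have hsk := hsa.1 _ hk
    have hWk := hW _ hk
    have hcb := h3 A₀.N A₁.N f k
    have hhol := h1 f (l ^ k) hk
    set Mk := ⨆ j : ℤ, ENNReal.ofReal (l ^ (-κ)) ^ (k - j).natAbs *
        (ENNReal.ofReal ((l ^ j) ^ (-η) * a' (l ^ j)) * Kf A₀.N A₁.N (l ^ j) f) with hMk
    set V := ρ (l ^ k) ^ (-θ) * a (ρ (l ^ k)) with hV
    have hVpos : 0 < V := by positivity
    set Wk := (l ^ k) ^ (-η) * a' (l ^ k) with hWkdef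
    have hWpos : 0 < Wk := by positivity
    rw [← hc₀] at hhol
    -- with a perturbation
    have hpert : ∀ ε : ℝ≥0∞, 0 < ε → ε ≠ ∞ →
        ENNReal.ofReal V * Kf X₀ X₁ (ρ (l ^ k)) f ≤ ((C1 + 1) * (C3 + 1)) * (Mk + ε) := by
      intro ε hε hε'
      by_cases hMt : Mk = ∞
      · rw [hMt, top_add, ENNReal.mul_top (by simp)]
        exact le_top
      set H := (C3 + 1) * ((Mk + ε) * ENNReal.ofReal (Wk⁻¹)) with hH
      have hHpos : 0 < H := by
        rw [hH, pos_iff_ne_zero]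
        refine mul_ne_zero (by simp) (mul_ne_zero (by simp [hε.ne']) ?_)
        simpa using hWpos
      have hHt : H ≠ ∞ := by finiteness
      have hgen : ∀ u, 0 < u → ∀ y : ℝ, (u / l ^ k) ^ η * RR u (l ^ k) ^ (2*κ) = y →
          Kf A₀.N A₁.N u f ≤ H * ENNReal.ofReal y := by
        intro u hu y hy
        refine (hcb u hu).trans ?_
        rw [hy, ENNReal.ofReal_mul (by positivity), hH]
        calc C3 * (Mk * (ENNReal.ofReal Wk⁻¹ * ENNReal.ofReal y))
            ≤ (C3 + 1) * ((Mk + ε) * (ENNReal.ofReal Wk⁻¹ * ENNReal.ofReal y)) :=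
              mul_le_mul' le_self_add (mul_le_mul' le_self_add le_rfl)
          _ = _ := by ring
      have hres := hhol H hHpos hHt
        (fun u hu hut => hgen u hu _ (by
          have hx : 0 < u / l ^ k := by positivity
          rw [RR_of_le hu hut, ← inv_div u (l ^ k), Real.inv_rpow hx.le, ← Real.rpow_neg hx.le,
            ← Real.rpow_add hx]
          congr 1))
        (fun u hut => hgen u (hk.trans_le hut) _ (by
          have hx : 0 < u / l ^ k := div_pos (hk.trans_le hut) hk
          rw [RR_of_ge hk hut, ← Real.rpow_add hx]))
        (ρ (l ^ k)) hρk (by rw [hw _ hk, ← hc₀])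
      calc ENNReal.ofReal V * Kf X₀ X₁ (ρ (l ^ k)) f
          ≤ ENNReal.ofReal V * (C1 * (H * ENNReal.ofReal ((l ^ k) ^ (-θ₀) * c₀ (l ^ k)))) :=
            mul_le_mul' le_rfl hres
        _ ≤ ENNReal.ofReal V *
              ((C1 + 1) * (H * ENNReal.ofReal ((l ^ k) ^ (-θ₀) * c₀ (l ^ k)))) :=
            mul_le_mul' le_rfl (mul_le_mul' le_self_add le_rfl)
        _ = (C1 + 1) * (C3 + 1) * (Mk + ε) * (ENNReal.ofReal Wk⁻¹ * (ENNReal.ofReal V *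
              ENNReal.ofReal ((l ^ k) ^ (-θ₀) * c₀ (l ^ k)))) := by rw [hH]; ring
        _ = _ := by
            rw [← ENNReal.ofReal_mul hVpos.le, ← hWk, ← ENNReal.ofReal_mul (by positivity),
              inv_mul_cancel₀ hWpos.ne', ENNReal.ofReal_one, mul_one]
    have htend : Tendsto (fun ε : ℝ≥0∞ => ((C1 + 1) * (C3 + 1)) * (Mk + ε)) (nhdsWithin 0 (Ioi 0))
        (nhds (((C1 + 1) * (C3 + 1)) * (Mk + 0))) := by
      refine ENNReal.Tendsto.const_mul ?_ (Or.inr (by finiteness))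
      exact (tendsto_const_nhds.add tendsto_id).mono_left nhdsWithin_le_nhds
    rw [add_zero] at htend
    refine ge_of_tendsto htend ?_
    have : ∀ᶠ ε : ℝ≥0∞ in nhdsWithin 0 (Ioi 0), ε < 1 :=
      nhdsWithin_le_nhds (Iio_mem_nhds one_pos)
    filter_upwards [this, self_mem_nhdsWithin] with ε h1 h2
    exact hpert ε h2 (h1.trans ENNReal.one_lt_top).ne
  have hlow : ∀ (f : E) (k : ℤ),
      ENNReal.ofReal ((l ^ k) ^ (-η) * a' (l ^ k)) * Kf A₀.N A₁.N (l ^ k) f ≤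
      C2 * (ENNReal.ofReal (ρ (l ^ k) ^ (-θ) * a (ρ (l ^ k))) * Kf X₀ X₁ (ρ (l ^ k)) f) := by
    intro f k
    have hk : 0 < l ^ k := by positivity
    have hρk := hρ0 _ hk
    have hak := ha.1 _ hρk
    have := h2 f (l ^ k) hk (ρ (l ^ k)) hρk (hw _ hk)
    rw [← hc₀] at this
    rw [hW _ hk, ENNReal.ofReal_mul (by positivity), mul_assoc]
    refine (mul_le_mul' le_rfl this).trans (le_of_eq ?_)
    ring
  have hA : ∀ f : E, normK X₀ X₁ θ r a f ≤
      (D1 * (((C1 + 1) * (C3 + 1)) * (C4 * D4))) * normK A₀.N A₁.N η r a' f := fun f => by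
    refine (hd1 X₀ X₁ f).trans ?_
    rw [mul_assoc]
    refine mul_le_mul' le_rfl ?_
    refine (lr_mono (hup f)).trans ?_
    rw [lr_const_mul hr, mul_assoc ((C1 + 1) * (C3 + 1))]
    refine mul_le_mul' le_rfl ?_
    rw [mul_assoc]
    exact (h4 _).trans (mul_le_mul' le_rfl (hd4 A₀.N A₁.N f))
  have hB : ∀ f : E, normK A₀.N A₁.N η r a' f ≤
      (D3 * (C2 * D2)) * normK X₀ X₁ θ r a f := fun f => by
    refine (hd3 A₀.N A₁.N f).trans ?_
    rw [mul_assoc]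
    refine mul_le_mul' le_rfl ?_
    refine (lr_mono (hlow f)).trans ?_
    rw [lr_const_mul hr, mul_assoc]
    exact mul_le_mul' le_rfl (hd2 X₀ X₁ f)
  have hKt : D1 * (((C1 + 1) * (C3 + 1)) * (C4 * D4)) + D3 * (C2 * D2) + 1 ≠ ∞ := by finiteness
  refine ⟨D1 * (((C1 + 1) * (C3 + 1)) * (C4 * D4)) + D3 * (C2 * D2) + 1, by simp, hKt, fun f => ⟨?_, ?_⟩⟩
  · rw [ENNReal.inv_mul_le_iff (by simp) hKt]
    refine (hB f).trans (mul_le_mul' ?_ le_rfl)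
    exact le_add_self.trans le_self_add
  · refine (hA f).trans (mul_le_mul' ?_ le_rfl)
    rw [add_assoc]; exact le_self_add

end
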